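/- arXiv:2303.07921 — 2 statements merged into one kernel-verified Lean document; each statement's English description precedes it below -/
import Mathlib

section
/- Let ρ : [0,T) × ℝ → (0,∞) be a smooth solution of the renormalized curvature flow PDE ∂_t ρ = ρ² ∂²_θ ρ + ρ²(ρ − 2h_t), 2π-periodic in θ and satisfying the closure conditions for every t. Then for all t ∈ [0,T) and all θ, ρ(t,θ) ≥ 1 / ( 1/ρ_inf(0) + (σ₀²/(6π²λ₀)) · √(24π² t + 4πλ₀) ), where ρ_inf(0) = min_θ ρ(0,θ), σ₀ = σ_0 and λ₀ = λ_0. -/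
/-!
The radius of curvature `1/ρ` satisfies `∂_t (1/ρ) = 2h - ρ - ∂²_θ ρ`. At a spatial maximum of
`1/ρ`, which is a minimum of `ρ`, the right-hand side is less than `2h`, so `max (1/ρ)` grows at
most at the rate `2h` (`rad_lt_barrier`). It remains to bound `h = σ/λ` by an explicit function of
time.

The area and the perimeter evolve by `λ' = 2σ²/λ - 2π` (`hasDerivAt_encArea`) and
`σ' = 4πσ/λ - ∫ ρ` (`hasDerivAt_perim`). The isoperimetric inequality `σ² ≥ 4πλ` gives
`λ' ≥ 6π`, so `λ ≥ λ₀ + 6πt` (`encArea_lower`). Together with the Cauchy–Schwarz inequality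
`∫ ρ ≥ 4π²/σ` it also shows that `q = σ²/λ` does not increase (`ratio_le`). Hence
`h = q/σ ≤ q₀/√(4πλ) ≤ q₀/√(24π²t + 4πλ₀)` (`hRatio_le`), and an antiderivative of twice this
bound is `q₀/(6π²) · √(24π²t + 4πλ₀)`, the barrier in the theorem.

The isoperimetric inequality is proved following Hurwitz. With `p = ⟨C, ν⟩` the support function,
`p'' + p = 1/ρ`, `σ = ∫ p` and `2λ = ∫ (p² - p'²)`, so it is the Wirtinger inequality for `p`.
-/

open Real Set Filter MeasureTheory Topology NNReal

/-- The perimeter of the strictly convex curve with curvature function `ρ`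
in tangent-angle coordinates: `σ = ∫₀^{2π} dθ/ρ(θ)`. -/
noncomputable def perim (ρ : ℝ → ℝ) : ℝ := ∫ θ in (0:ℝ)..(2 * π), 1 / ρ θ

/-- The curve associated to a curvature function `ρ` in tangent-angle coordinates:
`C(θ) = (∫₀^θ cos β/ρ(β) dβ, ∫₀^θ sin β/ρ(β) dβ)`. -/
noncomputable def curveP (ρ : ℝ → ℝ) (θ : ℝ) : ℝ × ℝ :=
  (∫ β in (0:ℝ)..θ, Real.cos β / ρ β, ∫ β in (0:ℝ)..θ, Real.sin β / ρ β)

/-- The enclosed area `λ = ½ ∫₀^{2π} ⟨C(θ), ν(θ)⟩/ρ(θ) dθ`, with outward normal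
`ν(θ) = (sin θ, −cos θ)`. -/
noncomputable def encArea (ρ : ℝ → ℝ) : ℝ :=
  (1 / 2) * ∫ θ in (0:ℝ)..(2 * π),
    ((curveP ρ θ).1 * Real.sin θ - (curveP ρ θ).2 * Real.cos θ) / ρ θ

/-- The ratio `h = σ/λ`. -/
noncomputable def hRatio (ρ : ℝ → ℝ) : ℝ := perim ρ / encArea ρ

/-- `ρ : [0,T) × ℝ → (0,∞)` is a smooth solution of the renormalized curvature flow PDE
`∂_t ρ = ρ² ∂²_θ ρ + ρ²(ρ − 2 h_t)`, `2π`-periodic in `θ` and satisfying the closure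
conditions for every `t`. -/
def IsRCFSolution (T : ℝ) (ρ : ℝ → ℝ → ℝ) : Prop :=
  ContDiffOn ℝ (⊤ : ℕ∞) (Function.uncurry ρ) (Ico 0 T ×ˢ (univ : Set ℝ)) ∧
  (∀ t ∈ Ico (0:ℝ) T, ∀ θ : ℝ, 0 < ρ t θ) ∧
  (∀ t ∈ Ico (0:ℝ) T, ∀ θ : ℝ, ρ t (θ + 2 * π) = ρ t θ) ∧
  (∀ t ∈ Ico (0:ℝ) T, (∫ θ in (0:ℝ)..(2 * π), Real.cos θ / ρ t θ) = 0) ∧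
  (∀ t ∈ Ico (0:ℝ) T, (∫ θ in (0:ℝ)..(2 * π), Real.sin θ / ρ t θ) = 0) ∧
  (∀ t ∈ Ico (0:ℝ) T, ∀ θ : ℝ,
    HasDerivWithinAt (fun s => ρ s θ)
      ((ρ t θ) ^ 2 * iteratedDeriv 2 (ρ t) θ + (ρ t θ) ^ 2 * (ρ t θ - 2 * hRatio (ρ t)))
      (Ico 0 T) t)

/-! ### The Wirtinger inequality -/

/-- Parseval's identity turns the inequality into `|c_n(f)| ≤ |c_n(f')|` for `n ≠ 0`. -/
lemma wirtinger_periodic {f f' : ℝ → ℝ} (hf : ∀ x, HasDerivAt f (f' x) x) (hf' : Continuous f')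
    (hper : f (2 * π) = f 0) :
    ∫ x in (0:ℝ)..(2 * π), f x ^ 2 ≤
      (∫ x in (0:ℝ)..(2 * π), f x) ^ 2 / (2 * π) + ∫ x in (0:ℝ)..(2 * π), f' x ^ 2 := by
  have hπ := Real.pi_pos
  have hab : (0:ℝ) < 2 * π := by positivity
  have hfc : Continuous f := continuous_iff_continuousAt.2 fun x => (hf x).continuousAt
  have hL2 : ∀ g : ℝ → ℝ, Continuous g →
      MemLp (fun x => (g x : ℂ)) 2 (volume.restrict (Ioc 0 (2 * π))) := by
    intro g hg
    have hc : Continuous fun x => (g x : ℂ) := Complex.continuous_ofReal.comp hg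
    obtain ⟨C, hC⟩ := isCompact_Icc.exists_bound_of_continuousOn (s := Icc 0 (2 * π)) hc.continuousOn
    refine MemLp.of_bound hc.aestronglyMeasurable C ?_
    filter_upwards [ae_restrict_mem measurableSet_Ioc] with x hx using hC x (Ioc_subset_Icc_self hx)
  have h2 := hasSum_sq_fourierCoeffOn hab (hL2 f' hf')
  have h1 := hasSum_sq_fourierCoeffOn hab (hL2 f hfc)
  -- the zeroth coefficient is the mean of `f`
  have h0 : ‖fourierCoeffOn hab (fun x => (f x : ℂ)) 0‖ ^ 2
      = ((∫ x in (0:ℝ)..(2 * π), f x) / (2 * π)) ^ 2 := by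
    rw [fourierCoeffOn_eq_integral]
    simp only [neg_zero, fourier_zero, one_smul, sub_zero, intervalIntegral.integral_ofReal, norm_smul,
      Complex.norm_real, mul_pow, Real.norm_eq_abs, sq_abs]
    ring
  have hn : ∀ n : ℤ, n ≠ 0 → ‖fourierCoeffOn hab (fun x => (f x : ℂ)) n‖ ^ 2 ≤
      ‖fourierCoeffOn hab (fun x => (f' x : ℂ)) n‖ ^ 2 := by
    intro n hn
    rw [fourierCoeffOn_of_hasDerivAt hab hn (f' := fun x => (f' x : ℂ))
      (fun x _ => (hf x).ofReal_comp)
      (Complex.continuous_ofReal.comp hf').continuousOn.intervalIntegrable]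
    rw [hper]
    have hn1 : (1:ℝ) ≤ |(n:ℝ)| := by exact_mod_cast Int.one_le_abs hn
    have hN : ‖(1 / (-2 * π * Complex.I * n) * (fourier (-n) ((0:ℝ) : AddCircle (2 * π - 0)) *
        ((f 0 : ℂ) - f 0) - (((2 * π : ℝ) : ℂ) - ((0:ℝ) : ℂ)) *
          fourierCoeffOn hab (fun x => (f' x : ℂ)) n))‖
        = ‖fourierCoeffOn hab (fun x => (f' x : ℂ)) n‖ / |(n:ℝ)| := by
      have hn0 : |(n:ℝ)| ≠ 0 := by positivity
      simp [abs_of_pos hπ]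
      field_simp
    rw [hN]
    gcongr
    exact div_le_self (norm_nonneg _) hn1
  have h3 := hasSum_le (f := fun n => ‖fourierCoeffOn hab (fun x => (f x : ℂ)) n‖ ^ 2)
    (g := fun n => (if n = 0 then ((∫ x in (0:ℝ)..(2 * π), f x) / (2 * π)) ^ 2 else 0) +
      ‖fourierCoeffOn hab (fun x => (f' x : ℂ)) n‖ ^ 2) ?_ h1 ((hasSum_ite_eq 0 _).add h2)
  · simp only [sub_zero, Complex.norm_real, Real.norm_eq_abs, sq_abs, smul_eq_mul] at h3
    have h4 := mul_le_mul_of_nonneg_left h3 hab.le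
    rw [mul_add] at h4
    field_simp at h4 ⊢
    linarith
  · intro n
    by_cases h : n = 0
    · subst h
      simp [h0]
    · simpa [h] using hn n h

/-! ### Support function, area and the isoperimetric inequality -/

section Static

variable {ρ : ℝ → ℝ}

lemma curveP_deriv (hc : Continuous ρ) (hpos : ∀ θ, 0 < ρ θ) (θ : ℝ) :
    HasDerivAt (fun θ => (curveP ρ θ).1) (Real.cos θ / ρ θ) θ ∧
    HasDerivAt (fun θ => (curveP ρ θ).2) (Real.sin θ / ρ θ) θ := by
  have h1 : Continuous fun β => Real.cos β / ρ β :=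
    Real.continuous_cos.div hc fun x => (hpos x).ne'
  have h2 : Continuous fun β => Real.sin β / ρ β :=
    Real.continuous_sin.div hc fun x => (hpos x).ne'
  exact ⟨h1.integral_hasStrictDerivAt 0 θ |>.hasDerivAt, h2.integral_hasStrictDerivAt 0 θ |>.hasDerivAt⟩

/-- The support function `⟨C(θ), ν(θ)⟩` of the curve. -/
noncomputable def suppFn (ρ : ℝ → ℝ) (θ : ℝ) : ℝ :=
  (curveP ρ θ).1 * Real.sin θ - (curveP ρ θ).2 * Real.cos θ

/-- The tangential component `⟨C(θ), (cos θ, sin θ)⟩`, which is the derivative of `suppFn`. -/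
noncomputable def suppFnDeriv (ρ : ℝ → ℝ) (θ : ℝ) : ℝ :=
  (curveP ρ θ).1 * Real.cos θ + (curveP ρ θ).2 * Real.sin θ

lemma hasDerivAt_suppFn (hc : Continuous ρ) (hpos : ∀ θ, 0 < ρ θ) (θ : ℝ) :
    HasDerivAt (suppFn ρ) (suppFnDeriv ρ θ) θ := by
  obtain ⟨h1, h2⟩ := curveP_deriv hc hpos θ
  refine ((h1.mul (Real.hasDerivAt_sin θ)).sub (h2.mul (Real.hasDerivAt_cos θ))).congr_deriv ?_
  simp only [suppFnDeriv]
  ring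

/-- With `p` the support function, this is `p'' + p = 1/ρ`. -/
lemma hasDerivAt_suppFnDeriv (hc : Continuous ρ) (hpos : ∀ θ, 0 < ρ θ) (θ : ℝ) :
    HasDerivAt (suppFnDeriv ρ) (1 / ρ θ - suppFn ρ θ) θ := by
  obtain ⟨h1, h2⟩ := curveP_deriv hc hpos θ
  refine ((h1.mul (Real.hasDerivAt_cos θ)).add (h2.mul (Real.hasDerivAt_sin θ))).congr_deriv ?_
  have := Real.sin_sq_add_cos_sq θ
  simp only [suppFn]
  have h : Real.cos θ / ρ θ * Real.cos θ + Real.sin θ / ρ θ * Real.sin θ = 1 / ρ θ := by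
    rw [← this]; ring
  linear_combination h

lemma continuous_suppFn (hc : Continuous ρ) (hpos : ∀ θ, 0 < ρ θ) : Continuous (suppFn ρ) :=
  continuous_iff_continuousAt.2 fun x => (hasDerivAt_suppFn hc hpos x).continuousAt

lemma continuous_suppFnDeriv (hc : Continuous ρ) (hpos : ∀ θ, 0 < ρ θ) :
    Continuous (suppFnDeriv ρ) :=
  continuous_iff_continuousAt.2 fun x => (hasDerivAt_suppFnDeriv hc hpos x).continuousAt

lemma suppFn_zero : suppFn ρ 0 = 0 ∧ suppFnDeriv ρ 0 = 0 := by
  simp [suppFn, suppFnDeriv, curveP]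

lemma suppFn_two_pi (h1 : (∫ θ in (0:ℝ)..(2 * π), Real.cos θ / ρ θ) = 0)
    (h2 : (∫ θ in (0:ℝ)..(2 * π), Real.sin θ / ρ θ) = 0) :
    suppFn ρ (2 * π) = 0 ∧ suppFnDeriv ρ (2 * π) = 0 := by
  simp [suppFn, suppFnDeriv, curveP, h1, h2]

lemma encArea_eq : encArea ρ = (1 / 2) * ∫ θ in (0:ℝ)..(2 * π), suppFn ρ θ / ρ θ := rfl

/-- With the starting point of the curve as origin, `p(θ) = ∫₀^θ sin(θ - β)/ρ(β) dβ`, which is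
positive for `θ ≤ π`; past `π` closure turns it into an integral over `[θ, 2π]`. -/
lemma suppFn_pos (hc : Continuous ρ) (hpos : ∀ θ, 0 < ρ θ)
    (h1 : (∫ θ in (0:ℝ)..(2 * π), Real.cos θ / ρ θ) = 0)
    (h2 : (∫ θ in (0:ℝ)..(2 * π), Real.sin θ / ρ θ) = 0) {θ : ℝ} (hθ : θ ∈ Ioo 0 (2 * π)) :
    0 < suppFn ρ θ := by
  have hc1 : Continuous fun β => Real.cos β / ρ β :=
    Real.continuous_cos.div hc fun x => (hpos x).ne'
  have hc2 : Continuous fun β => Real.sin β / ρ β :=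
    Real.continuous_sin.div hc fun x => (hpos x).ne'
  have hI : ∀ a b : ℝ, ∫ β in a..b, Real.sin (θ - β) / ρ β =
      (∫ β in a..b, Real.cos β / ρ β) * Real.sin θ - (∫ β in a..b, Real.sin β / ρ β) * Real.cos θ := by
    intro a b
    have hcA : Continuous fun β => Real.cos β / ρ β * Real.sin θ := hc1.mul continuous_const
    have hcB : Continuous fun β => Real.sin β / ρ β * Real.cos θ := hc2.mul continuous_const
    rw [← intervalIntegral.integral_mul_const, ← intervalIntegral.integral_mul_const,
      ← intervalIntegral.integral_sub (hcA.intervalIntegrable _ _) (hcB.intervalIntegrable _ _)]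
    congr 1
    ext β
    rw [Real.sin_sub]
    ring
  have hcs : Continuous fun β => Real.sin (θ - β) / ρ β :=
    Continuous.div (by fun_prop) hc fun x => (hpos x).ne'
  have hp : suppFn ρ θ = ∫ β in (0:ℝ)..θ, Real.sin (θ - β) / ρ β := (hI 0 θ).symm
  rw [hp]
  rcases le_or_gt θ π with h | h
  · refine intervalIntegral.intervalIntegral_pos_of_pos_on (hcs.intervalIntegrable _ _) ?_ hθ.1
    intro β hβ
    exact div_pos (Real.sin_pos_of_pos_of_lt_pi (by linarith [hβ.2]) (by linarith [hβ.1])) (hpos β)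
  · have hz : ∫ β in (0:ℝ)..(2 * π), Real.sin (θ - β) / ρ β = 0 := by rw [hI, h1, h2]; simp
    have hadd := intervalIntegral.integral_add_adjacent_intervals
      (hcs.intervalIntegrable (μ := volume) 0 θ) (hcs.intervalIntegrable θ (2 * π))
    have hneg : 0 < ∫ β in θ..(2 * π), -(Real.sin (θ - β) / ρ β) := by
      refine intervalIntegral.intervalIntegral_pos_of_pos_on
        (hcs.neg.intervalIntegrable _ _) ?_ hθ.2
      intro β hβ
      have hs : 0 < Real.sin (β - θ) :=
        Real.sin_pos_of_pos_of_lt_pi (by linarith [hβ.1]) (by linarith [hβ.2])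
      rw [← neg_div, ← Real.sin_neg, neg_sub]
      exact div_pos hs (hpos β)
    rw [intervalIntegral.integral_neg] at hneg
    linarith

lemma encArea_pos (hc : Continuous ρ) (hpos : ∀ θ, 0 < ρ θ)
    (h1 : (∫ θ in (0:ℝ)..(2 * π), Real.cos θ / ρ θ) = 0)
    (h2 : (∫ θ in (0:ℝ)..(2 * π), Real.sin θ / ρ θ) = 0) : 0 < encArea ρ := by
  rw [encArea_eq]
  refine mul_pos (by norm_num) (intervalIntegral.intervalIntegral_pos_of_pos_on
    (((continuous_suppFn hc hpos).div hc fun x => (hpos x).ne').intervalIntegrable _ _) ?_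
    (by positivity))
  intro θ hθ
  exact div_pos (suppFn_pos hc hpos h1 h2 hθ) (hpos θ)

lemma perim_pos (hc : Continuous ρ) (hpos : ∀ θ, 0 < ρ θ) : 0 < perim ρ := by
  refine intervalIntegral.intervalIntegral_pos_of_pos_on
    ((continuous_const.div hc fun x => (hpos x).ne').intervalIntegrable _ _) ?_ (by positivity)
  intro θ _
  exact one_div_pos.2 (hpos θ)

/-- Integration by parts against the support function: `∫ p (w'' + w) = ∫ w/ρ`. -/
lemma integral_suppFn_mul (hc : Continuous ρ) (hpos : ∀ θ, 0 < ρ θ)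
    (h1 : (∫ θ in (0:ℝ)..(2 * π), Real.cos θ / ρ θ) = 0)
    (h2 : (∫ θ in (0:ℝ)..(2 * π), Real.sin θ / ρ θ) = 0)
    {w w' w'' : ℝ → ℝ} (hw : ∀ x, HasDerivAt w (w' x) x) (hw' : ∀ x, HasDerivAt w' (w'' x) x)
    (hw'' : Continuous w'') :
    ∫ θ in (0:ℝ)..(2 * π), suppFn ρ θ * (w'' θ + w θ) =
      ∫ θ in (0:ℝ)..(2 * π), w θ / ρ θ := by
  have hwc : Continuous w := continuous_iff_continuousAt.2 fun x => (hw x).continuousAt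
  have hpc := continuous_suppFn hc hpos
  have hd : ∀ x, HasDerivAt (fun x => suppFn ρ x * w' x - suppFnDeriv ρ x * w x)
      (suppFn ρ x * (w'' x + w x) - w x / ρ x) x := by
    intro x
    refine (((hasDerivAt_suppFn hc hpos x).mul (hw' x)).sub
      ((hasDerivAt_suppFnDeriv hc hpos x).mul (hw x))).congr_deriv ?_
    ring
  have hcA : Continuous fun x => suppFn ρ x * (w'' x + w x) := by fun_prop
  have hcB : Continuous fun x => w x / ρ x := hwc.div hc fun x => (hpos x).ne'
  have := intervalIntegral.integral_eq_sub_of_hasDerivAt (a := 0) (b := 2 * π) (fun x _ => hd x)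
    ((hcA.sub hcB).intervalIntegrable _ _)
  rw [intervalIntegral.integral_sub (hcA.intervalIntegrable _ _) (hcB.intervalIntegrable _ _)] at this
  simp only [suppFn_zero.1, suppFn_zero.2, (suppFn_two_pi h1 h2).1, (suppFn_two_pi h1 h2).2] at this
  linarith

/-- The isoperimetric inequality, in Hurwitz's form: the Wirtinger inequality for the support
function `p`, combined with `σ = ∫ p` and `2λ = ∫ (p² - p'²)`. -/
lemma isoperimetric (hc : Continuous ρ) (hpos : ∀ θ, 0 < ρ θ)
    (h1 : (∫ θ in (0:ℝ)..(2 * π), Real.cos θ / ρ θ) = 0)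
    (h2 : (∫ θ in (0:ℝ)..(2 * π), Real.sin θ / ρ θ) = 0) :
    4 * π * encArea ρ ≤ perim ρ ^ 2 := by
  have hpc := continuous_suppFn hc hpos
  have hqc := continuous_suppFnDeriv hc hpos
  have hrc : Continuous fun x => 1 / ρ x := continuous_const.div hc fun x => (hpos x).ne'
  have hW := wirtinger_periodic (hasDerivAt_suppFn hc hpos) hqc
    ((suppFn_two_pi h1 h2).1.trans suppFn_zero.1.symm)
  have hσ : perim ρ = ∫ x in (0:ℝ)..(2 * π), suppFn ρ x := by
    have := intervalIntegral.integral_eq_sub_of_hasDerivAt (a := 0) (b := 2 * π)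
      (fun x _ => hasDerivAt_suppFnDeriv hc hpos x) ((hrc.sub hpc).intervalIntegrable _ _)
    rw [intervalIntegral.integral_sub (hrc.intervalIntegrable _ _) (hpc.intervalIntegrable _ _),
      suppFn_zero.2, (suppFn_two_pi h1 h2).2] at this
    simp only [perim]
    linarith
  have hA : 2 * encArea ρ = (∫ x in (0:ℝ)..(2 * π), suppFn ρ x ^ 2) -
      ∫ x in (0:ℝ)..(2 * π), suppFnDeriv ρ x ^ 2 := by
    have hd : ∀ x, HasDerivAt (fun x => suppFn ρ x * suppFnDeriv ρ x)
        (suppFn ρ x / ρ x - (suppFn ρ x ^ 2 - suppFnDeriv ρ x ^ 2)) x := by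
      intro x
      refine ((hasDerivAt_suppFn hc hpos x).mul (hasDerivAt_suppFnDeriv hc hpos x)).congr_deriv ?_
      ring
    have hcB : Continuous fun x => suppFn ρ x / ρ x := hpc.div hc fun x => (hpos x).ne'
    have hcP : Continuous fun x => suppFn ρ x ^ 2 := hpc.pow 2
    have hcQ : Continuous fun x => suppFnDeriv ρ x ^ 2 := hqc.pow 2
    have hcD : Continuous fun x => suppFn ρ x ^ 2 - suppFnDeriv ρ x ^ 2 := hcP.sub hcQ
    have := intervalIntegral.integral_eq_sub_of_hasDerivAt (a := 0) (b := 2 * π) (fun x _ => hd x)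
      ((hcB.sub hcD).intervalIntegrable _ _)
    rw [intervalIntegral.integral_sub (hcB.intervalIntegrable _ _) (hcD.intervalIntegrable _ _),
      intervalIntegral.integral_sub (hcP.intervalIntegrable _ _) (hcQ.intervalIntegrable _ _),
      suppFn_zero.2, (suppFn_two_pi h1 h2).2] at this
    rw [encArea_eq]
    linarith
  rw [← hσ] at hW
  have hle : 2 * encArea ρ ≤ perim ρ ^ 2 / (2 * π) := by linarith
  rw [le_div_iff₀ (by positivity)] at hle
  linarith

/-- Cauchy–Schwarz `4π² ≤ σ ∫ ρ`. -/
lemma four_pi_sq_div_perim_le (hc : Continuous ρ) (hpos : ∀ θ, 0 < ρ θ) :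
    4 * π ^ 2 / perim ρ ≤ ∫ θ in (0:ℝ)..(2 * π), ρ θ := by
  have hσ := perim_pos hc hpos
  -- integrate `2c ≤ ρ + c²/ρ` with the optimal constant `c = 2π/σ`
  set c := 2 * π / perim ρ with hcdef
  have hrc : Continuous fun x => 1 / ρ x := continuous_const.div hc fun x => (hpos x).ne'
  have hcr : Continuous fun x => c ^ 2 * (1 / ρ x) := continuous_const.mul hrc
  have hle : ∫ θ in (0:ℝ)..(2 * π), (2 * c) ≤ ∫ θ in (0:ℝ)..(2 * π), (ρ θ + c ^ 2 * (1 / ρ θ)) := by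
    refine intervalIntegral.integral_mono_on (by positivity) (by simp)
      ((hc.add hcr).intervalIntegrable _ _) ?_
    intro θ _
    have := hpos θ
    have h : ρ θ + c ^ 2 * (1 / ρ θ) - 2 * c = (ρ θ - c) ^ 2 / ρ θ := by
      field_simp
      ring
    have : 0 ≤ (ρ θ - c) ^ 2 / ρ θ := by positivity
    linarith
  rw [intervalIntegral.integral_add (hc.intervalIntegrable _ _) (hcr.intervalIntegrable _ _),
    intervalIntegral.integral_const, intervalIntegral.integral_const_mul (c ^ 2)] at hle
  change _ ≤ _ + c ^ 2 * perim ρ at hle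
  have e1 : c ^ 2 * perim ρ = 4 * π ^ 2 / perim ρ := by
    rw [hcdef]; field_simp; ring
  have e2 : (2 * π - 0) • (2 * c) = 2 * (4 * π ^ 2 / perim ρ) := by
    rw [hcdef, smul_eq_mul]; ring
  rw [e1, e2] at hle
  linarith

end Static

/-! ### Integrals depending on a parameter -/

section Parametric

lemma continuousOn_param_primitive {I : Set ℝ} {f : ℝ → ℝ → ℝ}
    (hf : ContinuousOn (Function.uncurry f) (I ×ˢ univ)) :
    ContinuousOn (fun p : ℝ × ℝ => ∫ β in (0:ℝ)..p.2, f p.1 β) (I ×ˢ univ) := by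
  have h1 : Continuous (Function.uncurry fun (x : I) (β : ℝ) => f x β) :=
    hf.comp_continuous (f := fun q : I × ℝ => ((q.1 : ℝ), q.2)) (by fun_prop)
      fun q => ⟨q.1.2, mem_univ _⟩
  have h2 := intervalIntegral.continuous_parametric_primitive_of_continuous (μ := volume)
    (a₀ := 0) h1
  rw [continuousOn_iff_continuous_domRestrict]
  exact h2.comp (f := fun x : (I ×ˢ (univ : Set ℝ) : Set (ℝ × ℝ)) =>
    ((⟨x.1.1, x.2.1⟩ : I), x.1.2)) (by fun_prop)

lemma continuousOn_param_integral {I : Set ℝ} {f : ℝ → ℝ → ℝ}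
    (hf : ContinuousOn (Function.uncurry f) (I ×ˢ univ)) (b : ℝ) :
    ContinuousOn (fun t => ∫ β in (0:ℝ)..b, f t β) I :=
  (continuousOn_param_primitive hf).comp (f := fun t => (t, b)) (by fun_prop)
    fun t ht => ⟨ht, mem_univ _⟩

lemma slice_continuous {I : Set ℝ} {f : ℝ → ℝ → ℝ}
    (hf : ContinuousOn (Function.uncurry f) (I ×ˢ univ)) {t : ℝ} (ht : t ∈ I) :
    Continuous (f t) :=
  hf.comp_continuous (f := fun θ => (t, θ)) (by fun_prop) fun θ => ⟨ht, mem_univ _⟩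

/-- Differentiation under the integral sign; the derivative is bounded near `t` by compactness. -/
lemma hasDerivAt_param_integral {U : Set ℝ} (hU : IsOpen U) {f f' : ℝ → ℝ → ℝ}
    (hf : ContinuousOn (Function.uncurry f) (U ×ˢ univ))
    (hf' : ContinuousOn (Function.uncurry f') (U ×ˢ univ))
    (hd : ∀ t ∈ U, ∀ θ, HasDerivAt (fun s => f s θ) (f' t θ) t) {t : ℝ} (ht : t ∈ U) (b : ℝ) :
    HasDerivAt (fun s => ∫ θ in (0:ℝ)..b, f s θ) (∫ θ in (0:ℝ)..b, f' t θ) t := by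
  obtain ⟨ε, hε, hsub⟩ := Metric.nhds_basis_closedBall.mem_iff.1 (hU.mem_nhds ht)
  obtain ⟨C, hC⟩ := ((isCompact_closedBall t ε).prod (isCompact_uIcc (a := (0:ℝ)) (b := b)))
    |>.exists_bound_of_continuousOn
      (hf'.mono (prod_mono hsub (subset_univ _)))
  refine (intervalIntegral.hasDerivAt_integral_of_dominated_loc_of_deriv_le
    (s := Metric.closedBall t ε) (bound := fun _ => C) (Metric.closedBall_mem_nhds t hε)
    ?_ ?_ ?_ ?_ ?_ ?_).2
  · filter_upwards [hU.mem_nhds ht] with s hs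
    exact (slice_continuous hf hs).aestronglyMeasurable
  · exact (slice_continuous hf ht).intervalIntegrable _ _
  · exact (slice_continuous hf' ht).aestronglyMeasurable
  · exact ae_of_all _ fun θ hθ s hs => hC (s, θ) ⟨hs, uIoc_subset_uIcc hθ⟩
  · simp
  · exact ae_of_all _ fun θ _ s hs => hd s (hsub hs) θ

end Parametric

/-! ### Evolution along the flow -/

section Flow

variable {T : ℝ} {ρ : ℝ → ℝ → ℝ}

lemma rcf_continuousOn (hρ : IsRCFSolution T ρ) :
    ContinuousOn (Function.uncurry ρ) (Ico 0 T ×ˢ univ) := hρ.1.continuousOn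

lemma rcf_contDiff (hρ : IsRCFSolution T ρ) {t : ℝ} (ht : t ∈ Ico 0 T) :
    ContDiff ℝ (⊤ : ℕ∞) (ρ t) := by
  have h := hρ.1.comp (s := univ) (f := fun θ : ℝ => (t, θ))
    (contDiff_const.prodMk contDiff_id).contDiffOn fun θ _ => ⟨ht, mem_univ _⟩
  exact contDiffOn_univ.1 h

/-- The right-hand side `∂_t ρ` of the flow equation. -/
noncomputable def rcfRhs (ρ : ℝ → ℝ → ℝ) (t θ : ℝ) : ℝ :=
  (ρ t θ) ^ 2 * iteratedDeriv 2 (ρ t) θ + (ρ t θ) ^ 2 * (ρ t θ - 2 * hRatio (ρ t))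

/-- `∂_t ρ` is jointly continuous because it is a component of the within-set derivative of the
jointly smooth function `ρ`. -/
lemma rcfRhs_continuousOn (hρ : IsRCFSolution T ρ) :
    ContinuousOn (Function.uncurry (rcfRhs ρ)) (Ico 0 T ×ˢ univ) := by
  have hS : UniqueDiffOn ℝ (Ico 0 T ×ˢ (univ : Set ℝ)) := (uniqueDiffOn_Ico 0 T).prod uniqueDiffOn_univ
  have hc := hρ.1.continuousOn_fderivWithin hS (by simp)
  refine (hc.clm_apply (continuousOn_const (c := ((1:ℝ), (0:ℝ))))).congr ?_
  rintro ⟨t, θ⟩ ⟨ht, -⟩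
  have h1 := ((hρ.1.differentiableOn (by simp)) (t, θ) ⟨ht, mem_univ _⟩).hasFDerivWithinAt
  have h2 : HasDerivWithinAt (fun s : ℝ => (s, θ)) ((1:ℝ), (0:ℝ)) (Ico 0 T) t :=
    (hasDerivWithinAt_id t _).prodMk (hasDerivWithinAt_const t _ θ)
  have h3 := h1.comp_hasDerivWithinAt t h2 (fun s hs => mk_mem_prod hs (mem_univ θ))
  exact ((uniqueDiffOn_Ico 0 T) t ht).eq_deriv _ (hρ.2.2.2.2.2 t ht θ) h3

/-- `∂_t (1/ρ) = w'' + w` with `w = 2h - ρ`. -/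
noncomputable def radDot (ρ : ℝ → ℝ → ℝ) (t θ : ℝ) : ℝ :=
  -iteratedDeriv 2 (ρ t) θ + (2 * hRatio (ρ t) - ρ t θ)

lemma radDot_eq (hρ : IsRCFSolution T ρ) {t : ℝ} (ht : t ∈ Ico 0 T) (θ : ℝ) :
    radDot ρ t θ = -rcfRhs ρ t θ / ρ t θ ^ 2 := by
  have := hρ.2.1 t ht θ
  rw [radDot, rcfRhs]
  field_simp
  ring

lemma radDot_continuousOn (hρ : IsRCFSolution T ρ) :
    ContinuousOn (Function.uncurry (radDot ρ)) (Ico 0 T ×ˢ univ) := by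
  refine ContinuousOn.congr (f := fun p : ℝ × ℝ => -Function.uncurry (rcfRhs ρ) p /
    (Function.uncurry ρ p) ^ 2) ?_ ?_
  · refine (rcfRhs_continuousOn hρ).neg.div ((rcf_continuousOn hρ).pow 2) ?_
    rintro ⟨t, θ⟩ ⟨ht, -⟩
    exact pow_ne_zero 2 (hρ.2.1 t ht θ).ne'
  · rintro ⟨t, θ⟩ ⟨ht, -⟩
    exact radDot_eq hρ ht θ

lemma rad_continuousOn (hρ : IsRCFSolution T ρ) :
    ContinuousOn (Function.uncurry fun t θ => 1 / ρ t θ) (Ico 0 T ×ˢ univ) := by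
  refine continuousOn_const.div (rcf_continuousOn hρ) ?_
  rintro ⟨t, θ⟩ ⟨ht, -⟩
  exact (hρ.2.1 t ht θ).ne'

lemma hasDerivAt_rad (hρ : IsRCFSolution T ρ) {t : ℝ} (ht : t ∈ Ioo 0 T) (θ : ℝ) :
    HasDerivAt (fun s => 1 / ρ s θ) (radDot ρ t θ) t := by
  have ht' := Ioo_subset_Ico_self ht
  have h := (hρ.2.2.2.2.2 t ht' θ).hasDerivAt (Ico_mem_nhds ht.1 ht.2)
  rw [radDot_eq hρ ht']
  simp only [one_div]
  exact h.fun_inv (ne_of_gt (hρ.2.1 t ht' θ))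

/-- The spatial derivatives of `w = 2h - ρ`. -/
lemma hasDerivAt_speed (hρ : IsRCFSolution T ρ) {t : ℝ} (ht : t ∈ Ico 0 T) :
    (∀ x, HasDerivAt (fun θ => 2 * hRatio (ρ t) - ρ t θ) (-deriv (ρ t) x) x) ∧
    (∀ x, HasDerivAt (fun θ => -deriv (ρ t) θ) (-iteratedDeriv 2 (ρ t) x) x) ∧
    Continuous (fun x => -iteratedDeriv 2 (ρ t) x) := by
  have hC := rcf_contDiff hρ ht
  have hC1 : ContDiff ℝ (⊤ : ℕ∞) (deriv (ρ t)) := by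
    have := hC.iterate_deriv 1
    simpa using this
  refine ⟨fun x => ?_, fun x => ?_, ?_⟩
  · exact ((hC.differentiable (by simp)) x).hasDerivAt.const_sub _
  · rw [iteratedDeriv_succ, iteratedDeriv_one]
    exact ((hC1.differentiable (by simp)) x).hasDerivAt.neg
  · exact (hC.continuous_iteratedDeriv 2 (WithTop.coe_le_coe.2 le_top)).neg

lemma deriv_periodic (hρ : IsRCFSolution T ρ) {t : ℝ} (ht : t ∈ Ico 0 T) :
    deriv (ρ t) (2 * π) = deriv (ρ t) 0 := by
  have h := deriv_comp_add_const (ρ t) (2 * π) 0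
  rw [zero_add] at h
  rw [← h]
  congr 1
  ext θ
  exact hρ.2.2.1 t ht θ

/-- `σ' = ∫ (w'' + w) = 4πh - ∫ ρ`, since `w''` integrates to zero over a period. -/
lemma hasDerivAt_perim (hρ : IsRCFSolution T ρ) {t : ℝ} (ht : t ∈ Ioo 0 T) :
    HasDerivAt (fun s => perim (ρ s))
      (4 * π * hRatio (ρ t) - ∫ θ in (0:ℝ)..(2 * π), ρ t θ) t := by
  have hsub : Ioo 0 T ×ˢ (univ : Set ℝ) ⊆ Ico 0 T ×ˢ univ := prod_mono Ioo_subset_Ico_self le_rfl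
  have ht' := Ioo_subset_Ico_self ht
  obtain ⟨-, hw', hw''⟩ := hasDerivAt_speed hρ ht'
  have h := hasDerivAt_param_integral isOpen_Ioo ((rad_continuousOn hρ).mono hsub)
    ((radDot_continuousOn hρ).mono hsub) (fun t ht θ => hasDerivAt_rad hρ ht θ) ht (2 * π)
  refine h.congr_deriv ?_
  have hc := (rcf_contDiff hρ ht').continuous
  have hcw : Continuous fun θ => 2 * hRatio (ρ t) - ρ t θ := continuous_const.sub hc
  have h0 := intervalIntegral.integral_eq_sub_of_hasDerivAt (a := 0) (b := 2 * π)
    (fun x _ => hw' x) (hw''.intervalIntegrable _ _)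
  simp only [radDot]
  rw [intervalIntegral.integral_add (hw''.intervalIntegrable _ _) (hcw.intervalIntegrable _ _), h0,
    intervalIntegral.integral_sub (by simp) (hc.intervalIntegrable _ _),
    intervalIntegral.integral_const, deriv_periodic hρ ht']
  simp only [smul_eq_mul]
  ring

/-- The convolution `∫₀^θ sin(θ - β) g(β) dβ`, with the sine expanded: the solution of
`p'' + p = g`, `p(0) = p'(0) = 0`. -/
noncomputable def sinConv (g : ℝ → ℝ) (θ : ℝ) : ℝ :=
  (∫ β in (0:ℝ)..θ, Real.cos β * g β) * Real.sin θ -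
    (∫ β in (0:ℝ)..θ, Real.sin β * g β) * Real.cos θ

lemma suppFn_rep (t : ℝ) : suppFn (ρ t) = sinConv fun β => 1 / ρ t β := by
  ext θ
  simp [suppFn, curveP, sinConv, div_eq_mul_inv]

lemma sinConv_continuousOn {I : Set ℝ} {g : ℝ → ℝ → ℝ}
    (hg : ContinuousOn (Function.uncurry g) (I ×ˢ univ)) :
    ContinuousOn (Function.uncurry fun t => sinConv (g t)) (I ×ˢ univ) := by
  have hcos : ContinuousOn (fun p : ℝ × ℝ => Real.cos p.2) (I ×ˢ univ) := by fun_prop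
  have hsin : ContinuousOn (fun p : ℝ × ℝ => Real.sin p.2) (I ×ˢ univ) := by fun_prop
  have h1 := continuousOn_param_primitive (f := fun t β => Real.cos β * g t β) (hcos.mul hg)
  have h2 := continuousOn_param_primitive (f := fun t β => Real.sin β * g t β) (hsin.mul hg)
  exact (h1.mul hsin).sub (h2.mul hcos)

lemma encArea_rep (t : ℝ) : encArea (ρ t) = (1 / 2) * ∫ θ in (0:ℝ)..(2 * π),
    sinConv (fun β => 1 / ρ t β) θ * (1 / ρ t θ) := by
  rw [encArea_eq]
  congr 2
  ext θ
  rw [suppFn_rep]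
  ring

lemma encArea_continuousOn (hρ : IsRCFSolution T ρ) :
    ContinuousOn (fun t => encArea (ρ t)) (Ico 0 T) := by
  simp only [encArea_rep]
  exact continuousOn_const.mul (continuousOn_param_integral
    (f := fun t θ => sinConv (fun β => 1 / ρ t β) θ * (1 / ρ t θ))
    ((sinConv_continuousOn (rad_continuousOn hρ)).mul (rad_continuousOn hρ)) _)

lemma perim_continuousOn (hρ : IsRCFSolution T ρ) :
    ContinuousOn (fun t => perim (ρ t)) (Ico 0 T) :=
  continuousOn_param_integral (rad_continuousOn hρ) _

/-- Variation of constants: the solution of `p'' + p = w'' + w` with `p(0) = p'(0) = 0` is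
`w` minus a linear combination of `cos` and `sin`. -/
lemma sinConv_of_ode {w w' w'' : ℝ → ℝ} (hw : ∀ x, HasDerivAt w (w' x) x)
    (hw' : ∀ x, HasDerivAt w' (w'' x) x) (hw'' : Continuous w'') (θ : ℝ) :
    sinConv (fun β => w'' β + w β) θ = w θ - w 0 * Real.cos θ - w' 0 * Real.sin θ := by
  have hwc : Continuous w := continuous_iff_continuousAt.2 fun x => (hw x).continuousAt
  have d1 : ∀ x, HasDerivAt (fun x => Real.cos x * w' x + Real.sin x * w x)
      (Real.cos x * (w'' x + w x)) x := fun x =>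
    (((Real.hasDerivAt_cos x).mul (hw' x)).add ((Real.hasDerivAt_sin x).mul (hw x))).congr_deriv
      (by ring)
  have d2 : ∀ x, HasDerivAt (fun x => Real.sin x * w' x - Real.cos x * w x)
      (Real.sin x * (w'' x + w x)) x := fun x =>
    (((Real.hasDerivAt_sin x).mul (hw' x)).sub ((Real.hasDerivAt_cos x).mul (hw x))).congr_deriv
      (by ring)
  rw [sinConv, intervalIntegral.integral_eq_sub_of_hasDerivAt (fun x _ => d1 x)
      (Continuous.intervalIntegrable (by fun_prop) _ _),
    intervalIntegral.integral_eq_sub_of_hasDerivAt (fun x _ => d2 x)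
      (Continuous.intervalIntegrable (by fun_prop) _ _)]
  simp only [Real.cos_zero, Real.sin_zero]
  linear_combination w θ * Real.sin_sq_add_cos_sq θ

/-- `λ' = 2hσ - 2π`. With `p` the support function and `r = 1/ρ`, `2λ = ∫ p r`; both halves of
`∫ (∂_t p r + p ∂_t r)` equal `∫ w r`, the first by `sinConv_of_ode` and closure, the second by
integration by parts. -/
lemma hasDerivAt_encArea (hρ : IsRCFSolution T ρ) {t : ℝ} (ht : t ∈ Ioo 0 T) :
    HasDerivAt (fun s => encArea (ρ s)) (2 * hRatio (ρ t) * perim (ρ t) - 2 * π) t := by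
  have hsub : Ioo 0 T ×ˢ (univ : Set ℝ) ⊆ Ico 0 T ×ˢ univ := prod_mono Ioo_subset_Ico_self le_rfl
  have ht' := Ioo_subset_Ico_self ht
  obtain ⟨hw, hw', hw''⟩ := hasDerivAt_speed hρ ht'
  have hr := (rad_continuousOn hρ).mono hsub
  have hr' := (radDot_continuousOn hρ).mono hsub
  have hk := sinConv_continuousOn hr
  have hk' := sinConv_continuousOn hr'
  have hcos : ContinuousOn (fun p : ℝ × ℝ => Real.cos p.2) (Ioo 0 T ×ˢ univ) := by fun_prop
  have hsin : ContinuousOn (fun p : ℝ × ℝ => Real.sin p.2) (Ioo 0 T ×ˢ univ) := by fun_prop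
  have hkd : ∀ s ∈ Ioo 0 T, ∀ θ, HasDerivAt (fun s => sinConv (fun β => 1 / ρ s β) θ)
      (sinConv (radDot ρ s) θ) s := by
    intro s hs θ
    have e1 := hasDerivAt_param_integral isOpen_Ioo
      (f := fun s β => Real.cos β * (1 / ρ s β)) (f' := fun s β => Real.cos β * radDot ρ s β)
      (hcos.mul hr) (hcos.mul hr') (fun s hs β => (hasDerivAt_rad hρ hs β).const_mul _) hs θ
    have e2 := hasDerivAt_param_integral isOpen_Ioo
      (f := fun s β => Real.sin β * (1 / ρ s β)) (f' := fun s β => Real.sin β * radDot ρ s β)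
      (hsin.mul hr) (hsin.mul hr') (fun s hs β => (hasDerivAt_rad hρ hs β).const_mul _) hs θ
    exact (e1.mul_const _).fun_sub (e2.mul_const _)
  have hmain := hasDerivAt_param_integral isOpen_Ioo
    (f := fun s θ => sinConv (fun β => 1 / ρ s β) θ * (1 / ρ s θ))
    (f' := fun s θ => sinConv (radDot ρ s) θ * (1 / ρ s θ) +
      sinConv (fun β => 1 / ρ s β) θ * radDot ρ s θ) (hk.mul hr) ((hk'.mul hr).add (hk.mul hr'))
    (fun s hs θ => (hkd s hs θ).fun_mul (hasDerivAt_rad hρ hs θ)) ht (2 * π)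
  simp only [encArea_rep]
  refine (hmain.const_mul (1 / 2)).congr_deriv ?_
  have hc := (rcf_contDiff hρ ht').continuous
  have hpos := hρ.2.1 t ht'
  have hcl1 := hρ.2.2.2.1 t ht'
  have hcl2 := hρ.2.2.2.2.1 t ht'
  have hne : ∀ x, ρ t x ≠ 0 := fun x => (hpos x).ne'
  have hrc : Continuous fun x => 1 / ρ t x := continuous_const.div hc hne
  set h := hRatio (ρ t) with hh
  -- `∫ w/ρ = 2hσ - 2π`
  have hwr : ∫ θ in (0:ℝ)..(2 * π), (2 * h - ρ t θ) / ρ t θ = 2 * h * perim (ρ t) - 2 * π := by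
    have : ∀ θ, (2 * h - ρ t θ) / ρ t θ = 2 * h * (1 / ρ t θ) - 1 := fun θ => by
      have := hne θ
      field_simp
    have hc2 : Continuous fun θ => 2 * h * (1 / ρ t θ) := continuous_const.mul hrc
    simp only [this]
    rw [intervalIntegral.integral_sub (hc2.intervalIntegrable _ _) (by simp),
      intervalIntegral.integral_const_mul]
    simp [perim]
  have hA := integral_suppFn_mul hc hpos hcl1 hcl2 hw hw' hw''
  rw [hwr] at hA
  -- the `cos` and `sin` terms integrate to zero against `1/ρ` by closure
  have hB : ∫ θ in (0:ℝ)..(2 * π), ((2 * h - ρ t θ) - (2 * h - ρ t 0) * Real.cos θ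
      - (-deriv (ρ t) 0) * Real.sin θ) * (1 / ρ t θ) = 2 * h * perim (ρ t) - 2 * π := by
    have e : ∀ θ, ((2 * h - ρ t θ) - (2 * h - ρ t 0) * Real.cos θ
      - (-deriv (ρ t) 0) * Real.sin θ) * (1 / ρ t θ) = ((2 * h - ρ t θ) / ρ t θ -
        (2 * h - ρ t 0) * (Real.cos θ / ρ t θ)) - (-deriv (ρ t) 0) * (Real.sin θ / ρ t θ) :=
      fun θ => by ring
    have c1 : Continuous fun θ => (2 * h - ρ t θ) / ρ t θ := (continuous_const.sub hc).div hc hne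
    have c2 : Continuous fun θ => (2 * h - ρ t 0) * (Real.cos θ / ρ t θ) :=
      continuous_const.mul (Real.continuous_cos.div hc hne)
    have c3 : Continuous fun θ => (-deriv (ρ t) 0) * (Real.sin θ / ρ t θ) :=
      continuous_const.mul (Real.continuous_sin.div hc hne)
    have c12 : Continuous fun θ => (2 * h - ρ t θ) / ρ t θ -
      (2 * h - ρ t 0) * (Real.cos θ / ρ t θ) := c1.sub c2
    simp only [e]
    rw [intervalIntegral.integral_sub (c12.intervalIntegrable _ _)
        (c3.intervalIntegrable _ _),
      intervalIntegral.integral_sub (c1.intervalIntegrable _ _) (c2.intervalIntegrable _ _),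
      intervalIntegral.integral_const_mul, intervalIntegral.integral_const_mul, hcl1, hcl2, hwr]
    ring
  have hpt : ∀ θ, sinConv (radDot ρ t) θ =
      (2 * h - ρ t θ) - (2 * h - ρ t 0) * Real.cos θ - (-deriv (ρ t) 0) * Real.sin θ := fun θ =>
    sinConv_of_ode hw hw' hw'' θ
  simp only [hpt, ← suppFn_rep]
  have c4 : Continuous fun θ => ((2 * h - ρ t θ) - (2 * h - ρ t 0) * Real.cos θ
      - (-deriv (ρ t) 0) * Real.sin θ) * (1 / ρ t θ) := by fun_prop
  have c5 : Continuous fun θ => suppFn (ρ t) θ * radDot ρ t θ :=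
    (continuous_suppFn hc hpos).mul (hw''.add (continuous_const.sub hc))
  rw [intervalIntegral.integral_add (c4.intervalIntegrable _ _) (c5.intervalIntegrable _ _), hB]
  simp only [radDot]
  rw [hA]
  ring

/-! ### Monotone quantities -/

lemma rcf_isoperimetric (hρ : IsRCFSolution T ρ) {t : ℝ} (ht : t ∈ Ico 0 T) :
    0 < encArea (ρ t) ∧ 0 < perim (ρ t) ∧ 4 * π * encArea (ρ t) ≤ perim (ρ t) ^ 2 := by
  have hc := (rcf_contDiff hρ ht).continuous
  have hpos := hρ.2.1 t ht
  have h1 := hρ.2.2.2.1 t ht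
  have h2 := hρ.2.2.2.2.1 t ht
  exact ⟨encArea_pos hc hpos h1 h2, perim_pos hc hpos, isoperimetric hc hpos h1 h2⟩

/-- `λ' = 2σ²/λ - 2π ≥ 6π`, hence the area grows at least linearly. -/
lemma encArea_lower (hρ : IsRCFSolution T ρ) {t : ℝ} (ht : t ∈ Ico 0 T) :
    encArea (ρ 0) + 6 * π * t ≤ encArea (ρ t) := by
  have hmono : MonotoneOn (fun t => encArea (ρ t) - 6 * π * t) (Ico 0 T) := by
    have hd : ∀ s ∈ Ioo 0 T, HasDerivAt (fun t => encArea (ρ t) - 6 * π * t)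
        (2 * hRatio (ρ s) * perim (ρ s) - 2 * π - 6 * π) s := fun s hs => by
      simpa using (hasDerivAt_encArea hρ hs).fun_sub ((hasDerivAt_id s).const_mul (6 * π))
    refine monotoneOn_of_deriv_nonneg (convex_Ico 0 T)
      ((encArea_continuousOn hρ).sub (by fun_prop)) ?_ ?_
    · rw [interior_Ico]
      exact fun s hs => (hd s hs).differentiableAt.differentiableWithinAt
    · rw [interior_Ico]
      intro s hs
      rw [(hd s hs).deriv]
      obtain ⟨hA, hσ, hiso⟩ := rcf_isoperimetric hρ (Ioo_subset_Ico_self hs)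
      have : 4 * π ≤ hRatio (ρ s) * perim (ρ s) := by
        rw [hRatio, div_mul_eq_mul_div, le_div_iff₀ hA]
        nlinarith
      linarith
  have := hmono ⟨le_rfl, ht.1.trans_lt ht.2⟩ ht ht.1
  simp only [mul_zero, sub_zero] at this
  linarith

/-- The isoperimetric ratio `q = σ²/λ` does not increase: Cauchy–Schwarz gives
`λ q' ≤ 2 (5π q - 4π² - q²) = -2 (q - π) (q - 4π)`, and `q ≥ 4π`. -/
lemma ratio_le (hρ : IsRCFSolution T ρ) {t : ℝ} (ht : t ∈ Ico 0 T) :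
    perim (ρ t) ^ 2 / encArea (ρ t) ≤ perim (ρ 0) ^ 2 / encArea (ρ 0) := by
  have hanti : AntitoneOn (fun t => perim (ρ t) ^ 2 / encArea (ρ t)) (Ico 0 T) := by
    have hd : ∀ s ∈ Ioo 0 T, HasDerivAt (fun t => perim (ρ t) ^ 2 / encArea (ρ t)) _ s :=
      fun s hs => ((hasDerivAt_perim hρ hs).fun_pow 2).fun_div (hasDerivAt_encArea hρ hs)
        (rcf_isoperimetric hρ (Ioo_subset_Ico_self hs)).1.ne'
    refine antitoneOn_of_deriv_nonpos (convex_Ico 0 T)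
      (((perim_continuousOn hρ).pow 2).div (encArea_continuousOn hρ)
        fun s hs => (rcf_isoperimetric hρ hs).1.ne') ?_ ?_
    · rw [interior_Ico]
      exact fun s hs => (hd s hs).differentiableAt.differentiableWithinAt
    · rw [interior_Ico]
      intro s hs
      rw [(hd s hs).deriv]
      have hs' := Ioo_subset_Ico_self hs
      obtain ⟨hA, hσ, hiso⟩ := rcf_isoperimetric hρ hs'
      have hCS := four_pi_sq_div_perim_le (rcf_contDiff hρ hs').continuous (hρ.2.1 s hs')
      refine div_nonpos_of_nonpos_of_nonneg ?_ (by positivity)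
      simp only [hRatio]
      set σ := perim (ρ s)
      set A := encArea (ρ s)
      set K := ∫ θ in (0:ℝ)..(2 * π), ρ s θ
      have hπ := Real.pi_pos
      have h1 : 2 * σ * A * (4 * π ^ 2 / σ) ≤ 2 * σ * A * K := by gcongr
      have e1 : 2 * σ * A * (4 * π ^ 2 / σ) = 8 * π ^ 2 * A := by field_simp; ring
      have key : (σ ^ 2 - π * A) * (σ ^ 2 - 4 * π * A) ≥ 0 := by
        apply mul_nonneg <;> nlinarith
      have goal2 : (2 * σ * (4 * π * (σ / A) - K) * A -
          σ ^ 2 * (2 * (σ / A) * σ - 2 * π)) * A ≤ 0 := by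
        have : (2 * σ * (4 * π * (σ / A) - K) * A - σ ^ 2 * (2 * (σ / A) * σ - 2 * π)) * A =
            8 * π * σ ^ 2 * A - 2 * σ * A * K * A - σ ^ 2 * (2 * σ ^ 2 - 2 * π * A) := by
          field_simp
          ring
        rw [this]
        nlinarith [mul_le_mul_of_nonneg_right (e1 ▸ h1) hA.le]
      have := nonpos_of_mul_nonpos_left goal2 hA
      simpa using this
  exact hanti ⟨le_rfl, ht.1.trans_lt ht.2⟩ ht ht.1

/-- `h = q/σ ≤ q₀/√(4πλ) ≤ q₀/√(24π² t + 4πλ₀)`. -/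
lemma hRatio_le (hρ : IsRCFSolution T ρ) {t : ℝ} (ht : t ∈ Ico 0 T) :
    hRatio (ρ t) ≤ perim (ρ 0) ^ 2 / encArea (ρ 0) /
      Real.sqrt (24 * π ^ 2 * t + 4 * π * encArea (ρ 0)) := by
  obtain ⟨hA, hσ, hiso⟩ := rcf_isoperimetric hρ ht
  obtain ⟨hA0, hσ0, -⟩ := rcf_isoperimetric hρ ⟨le_rfl, ht.1.trans_lt ht.2⟩
  have hπ := Real.pi_pos
  have h1 := encArea_lower hρ ht
  have h2 := ratio_le hρ ht
  have ht0 := ht.1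
  have hrad : 0 < 24 * π ^ 2 * t + 4 * π * encArea (ρ 0) := by positivity
  have hs : Real.sqrt (24 * π ^ 2 * t + 4 * π * encArea (ρ 0)) ≤ perim (ρ t) := by
    refine Real.sqrt_le_iff.2 ⟨hσ.le, ?_⟩
    nlinarith
  have e : hRatio (ρ t) = perim (ρ t) ^ 2 / encArea (ρ t) / perim (ρ t) := by
    rw [hRatio]; field_simp
  rw [e]
  have := Real.sqrt_pos.2 hrad
  gcongr

/-! ### The comparison principle -/

/-- The second derivative is nonnegative at a global minimum. -/
lemma iteratedDeriv_two_nonneg {f : ℝ → ℝ} (hf : Continuous f) {x : ℝ} (hmin : ∀ y, f x ≤ f y) :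
    0 ≤ iteratedDeriv 2 f x := by
  by_contra! hneg
  rw [iteratedDeriv_succ, iteratedDeriv_one] at hneg
  have hlm : IsLocalMin f x := Filter.Eventually.of_forall hmin
  -- otherwise `x` would also be a local maximum, so `f` would be locally constant
  have hmax := isLocalMax_of_deriv_deriv_neg hneg hlm.deriv_eq_zero hf.continuousAt
  have hconst : f =ᶠ[𝓝 x] fun _ => f x := hmax.mono fun y hy => le_antisymm hy (hmin y)
  have := hconst.deriv.deriv_eq
  simp [this] at hneg

/-- Comparison principle: at a first touching time of `max 1/ρ` with a barrier `Φ` satisfying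
`Φ' ≥ 2h`, one has `∂_t (1/ρ) = 2h - ρ - ρ'' < 2h`, so `1/ρ` could not have reached `Φ` from
below. -/
lemma rad_lt_barrier (hρ : IsRCFSolution T ρ) {Φ Φ' : ℝ → ℝ} (hΦc : ContinuousOn Φ (Ico 0 T))
    (hΦ : ∀ t ∈ Ioo 0 T, HasDerivAt Φ (Φ' t) t)
    (hΦ' : ∀ t ∈ Ioo 0 T, 2 * hRatio (ρ t) ≤ Φ' t) (h0 : ∀ θ, 1 / ρ 0 θ < Φ 0)
    {t : ℝ} (ht : t ∈ Ico 0 T) (θ : ℝ) : 1 / ρ t θ < Φ t := by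
  have hsubI : Icc 0 t ⊆ Ico 0 T := Icc_subset_Ico_right ht.2
  have hper : ∀ s ∈ Ico 0 T, ∀ θ, ∃ θ' ∈ Icc 0 (2 * π), ρ s θ' = ρ s θ := by
    intro s hs θ
    obtain ⟨y, hy, hy'⟩ := Function.Periodic.exists_mem_Ico₀ (f := ρ s) (c := 2 * π)
      (fun x => hρ.2.2.1 s hs x) (by positivity) θ
    exact ⟨y, Ico_subset_Icc_self hy, hy'.symm⟩
  by_contra! hcon
  set v : ℝ × ℝ → ℝ := fun p => 1 / ρ p.1 p.2 - Φ p.1 with hv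
  have hvc : ContinuousOn v (Ico 0 T ×ˢ univ) :=
    (rad_continuousOn hρ).sub (hΦc.comp continuousOn_fst fun p hp => hp.1)
  set B : Set (ℝ × ℝ) := Icc 0 t ×ˢ Icc 0 (2 * π)
  have hBc : IsCompact B := isCompact_Icc.prod isCompact_Icc
  have hBsub : B ⊆ Ico 0 T ×ˢ univ := prod_mono hsubI (subset_univ _)
  have hK : IsCompact (B ∩ v ⁻¹' Ici 0) :=
    hBc.of_isClosed_subset ((hvc.mono hBsub).preimage_isClosed_of_isClosed hBc.isClosed isClosed_Ici)
      inter_subset_left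
  have hKne : (B ∩ v ⁻¹' Ici 0).Nonempty := by
    obtain ⟨θ', hθ', he⟩ := hper t ht θ
    refine ⟨(t, θ'), ⟨⟨ht.1, le_rfl⟩, hθ'⟩, ?_⟩
    simp only [mem_preimage, mem_Ici, hv, he]
    linarith
  -- the first touching time `s` and a touching point `φ`
  obtain ⟨⟨s, φ⟩, ⟨⟨hs, hφ⟩, hvs⟩, hmin⟩ := hK.exists_isMinOn hKne continuousOn_fst
  simp only [mem_preimage, mem_Ici, hv] at hvs hs hφ
  have hsT := hsubI hs
  have hs0 : 0 < s := by
    rcases hs.1.eq_or_lt with h | h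
    · subst h
      linarith [h0 φ]
    · exact h
  have hsI : s ∈ Ioo 0 T := ⟨hs0, hsT.2⟩
  have hbefore : ∀ u ∈ Ico 0 s, ∀ y ∈ Icc 0 (2 * π), 1 / ρ u y < Φ u := by
    intro u hu y hy
    by_contra! hc
    have : s ≤ u := hmin (a := (u, y)) ⟨⟨⟨hu.1, hu.2.le.trans hs.2⟩, hy⟩, by
      simp only [mem_preimage, mem_Ici, hv]; linarith⟩
    linarith [hu.2]
  have hleft : ∀ᶠ u in 𝓝[<] s, u ∈ Ico 0 s :=
    Filter.mem_of_superset (Ioo_mem_nhdsLT hs0) Ioo_subset_Ico_self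
  have hat : ∀ y ∈ Icc 0 (2 * π), 1 / ρ s y ≤ Φ s := by
    intro y hy
    have t1 := (hasDerivAt_rad hρ hsI y).continuousAt.tendsto.mono_left
      (nhdsWithin_le_nhds (s := Iio s))
    have t2 := (hΦ s hsI).continuousAt.tendsto.mono_left (nhdsWithin_le_nhds (s := Iio s))
    exact le_of_tendsto_of_tendsto t1 t2 (hleft.mono fun u hu => (hbefore u hu y hy).le)
  have hglob : ∀ y, ρ s φ ≤ ρ s y := by
    intro y
    obtain ⟨y', hy', he⟩ := hper s hsT y
    rw [← he]
    have h1 := (hat y' hy').trans (by linarith : Φ s ≤ 1 / ρ s φ)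
    exact (one_div_le_one_div (hρ.2.1 s hsT _) (hρ.2.1 s hsT _)).1 h1
  have h2nd := iteratedDeriv_two_nonneg (rcf_contDiff hρ hsT).continuous hglob
  have hd := (hasDerivAt_rad hρ hsI φ).sub (hΦ s hsI)
  have hneg : radDot ρ s φ - Φ' s < 0 := by
    have := hΦ' s hsI
    have := hρ.2.1 s hsT φ
    rw [radDot]
    linarith
  -- a negative time derivative would make `1/ρ - Φ` positive just before `s`
  have hslope := (hasDerivAt_iff_tendsto_slope_left_right.1 hd).1.eventually (gt_mem_nhds hneg)
  obtain ⟨u, hu1, hu2⟩ := (hslope.and hleft).exists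
  rw [slope_def_field, div_neg_iff] at hu1
  have hb := hbefore u hu2 φ hφ
  have := hu2.2
  simp only [Pi.sub_apply] at hu1
  rcases hu1 with h | h <;> linarith [h.1, h.2]

end Flow

/-! ### The lower bound on the curvature -/

/-- Along the renormalized curvature flow,
`ρ(t,θ) ≥ 1/(1/ρ_inf(0) + (σ₀²/(6π²λ₀)) √(24π² t + 4πλ₀))`, where
`ρ_inf(0) = min_θ ρ(0,θ)`, `σ₀ = σ_0`, `λ₀ = λ_0`. -/
theorem stmt9 (T : ℝ) (hT : 0 < T) (ρ : ℝ → ℝ → ℝ) (hρ : IsRCFSolution T ρ) :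
    ∀ t ∈ Ico (0:ℝ) T, ∀ θ : ℝ,
      1 / (1 / sInf (Set.range (ρ 0)) +
        (perim (ρ 0)) ^ 2 / (6 * π ^ 2 * encArea (ρ 0)) *
          Real.sqrt (24 * π ^ 2 * t + 4 * π * encArea (ρ 0))) ≤ ρ t θ := by
  intro t ht θ
  have h0T : (0:ℝ) ∈ Ico 0 T := ⟨le_rfl, hT⟩
  have hpos0 := hρ.2.1 0 h0T
  obtain ⟨hA0, hσ0, -⟩ := rcf_isoperimetric hρ h0T
  have hπ := Real.pi_pos
  set q₀ := perim (ρ 0) ^ 2 / encArea (ρ 0) with hq₀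
  have hq₀pos : 0 < q₀ := by positivity
  have hcoef : perim (ρ 0) ^ 2 / (6 * π ^ 2 * encArea (ρ 0)) = q₀ / (6 * π ^ 2) := by
    rw [hq₀]; field_simp
  -- the infimum of `ρ(0, ·)` is attained, hence positive
  have hinf : 0 < sInf (range (ρ 0)) := by
    have hcompact : IsCompact (range (ρ 0)) := Function.Periodic.compact_of_continuous
      (c := 2 * π) (fun x => hρ.2.2.1 0 h0T x) (by positivity) (rcf_contDiff hρ h0T).continuous
    obtain ⟨x, hx⟩ := hcompact.sInf_mem (range_nonempty _)
    rw [← hx]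
    exact hpos0 x
  have hbdd : BddBelow (range (ρ 0)) := ⟨0, by rintro _ ⟨x, rfl⟩; exact (hpos0 x).le⟩
  have hrad : ∀ s, 0 ≤ s → 0 < 24 * π ^ 2 * s + 4 * π * encArea (ρ 0) := fun s hs => by positivity
  set Φ : ℝ → ℝ := fun s => 1 / sInf (range (ρ 0)) + q₀ / (6 * π ^ 2) *
    Real.sqrt (24 * π ^ 2 * s + 4 * π * encArea (ρ 0)) with hΦdef
  have hΦd : ∀ s ∈ Ioo 0 T, HasDerivAt Φ
      (2 * (q₀ / Real.sqrt (24 * π ^ 2 * s + 4 * π * encArea (ρ 0)))) s := by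
    intro s hs
    have hr := hrad s hs.1.le
    have hlin : HasDerivAt (fun s => 24 * π ^ 2 * s + 4 * π * encArea (ρ 0)) (24 * π ^ 2) s := by
      simpa using ((hasDerivAt_id s).const_mul (24 * π ^ 2)).add_const (4 * π * encArea (ρ 0))
    -- the constant in `Φ` is chosen so that `Φ'` is twice the bound on `h` in `hRatio_le`
    refine (((hlin.sqrt hr.ne').const_mul (q₀ / (6 * π ^ 2))).const_add _).congr_deriv ?_
    have := Real.sqrt_pos.2 hr
    field_simp
    norm_num
  have hlt := rad_lt_barrier hρ (Φ := Φ) (by fun_prop) hΦd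
    (fun s hs => mul_le_mul_of_nonneg_left (hRatio_le hρ (Ioo_subset_Ico_self hs)) zero_le_two)
    (fun y => by
      have h1 : 1 / ρ 0 y ≤ 1 / sInf (range (ρ 0)) :=
        one_div_le_one_div_of_le hinf (csInf_le hbdd ⟨y, rfl⟩)
      have h2 := Real.sqrt_pos.2 (hrad 0 le_rfl)
      have h3 : 0 < q₀ / (6 * π ^ 2) * Real.sqrt (24 * π ^ 2 * 0 + 4 * π * encArea (ρ 0)) := by
        positivity
      simp only [hΦdef]
      linarith) ht θ
  rw [hcoef]
  have hρpos := hρ.2.1 t ht θ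
  exact (one_div_le hρpos ((one_div_pos.2 hρpos).trans hlt)).1 hlt.le
end

section
/- Let ρ : [0,T) × ℝ → (0,∞) be a smooth solution of the renormalized curvature flow PDE ∂_t ρ = ρ² ∂²_θ ρ + ρ²(ρ − 2h_t), 2π-periodic in θ and satisfying the closure conditions for every t. Then the entropy Ent(t) := ∫₀^{2π} log ρ(t,θ) dθ is non-increasing on [0,T), and satisfies for all t ∈ [0,T): 2π(log ρ_inf(0) − h₀² t) ≤ Ent(t) ≤ Ent(0) + (π ρ_inf(0)²/(2h₀²)) (e^{−2h₀² t} − 1), where ρ_inf(0) = min_θ ρ(0,θ) and h₀ = h_0. -/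
/-!
For a single curve with curvature `r`, perimeter `σ`, area `λ` and `h = σ/λ`, write
`speedK r = r'' + r - 2h`, so that the flow is `∂ₜρ = ρ² · speedK ρ`.

*Monotonicity of `h`.* Differentiating under the integral sign and integrating by parts gives
`σ' = -∫ρ + 4πh` and `λ' = -2π + 2hσ`. With the Cauchy–Schwarz inequality `σ ∫ρ ≥ 4π²`, the sign of
`h'` reduces to `(σ² - πλ)(σ² - 2πλ) ≥ 0`, for which the weak isoperimetric inequality `σ² ≥ 8λ`
suffices; it comes from enclosing the curve in a rectangle
(`IsCurvature.isoperimetric`, `IsRCFSolution.hRatio_antitoneOn`).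

*Lower bound.* At a spatial minimum, `∂ₜρ ≥ ρ²(ρ - 2h) = ρ((ρ - h)² - h²) ≥ -h₀² ρ`, so the minimum
principle gives `ρ(t, θ) ≥ ρ_inf(0) e^{-h₀² t}` (`IsRCFSolution.lower_bound`). Integrating the
logarithm gives the lower bound on the entropy.

*Dissipation.* The entropy satisfies `Ent' = ∫ (ρ² - ρ'² - 2hρ) = ∫ ((ρ - h)² - ρ'² - h²)`. By an
estimate of Gage and Hamilton, `ρ > h` is impossible on an interval of tangent angles of length `π`:
the curve would lie in a strip too thin for its area (`IsCurvature.exists_le_hRatio`). Hence the set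
where `u = ρ - h` is positive is a union of open intervals of length less than `π`, on which
the Wirtinger inequality holds, while `u² ≤ (h - m)²` elsewhere, where `m` is a lower bound for `ρ`
(`wirtinger_period`). Therefore `Ent' ≤ 2π((h - m)² - h²) ≤ -2πm²`, using `m ≤ h`
(`IsCurvature.dissipation`). Taking `m = ρ_inf(0) e^{-h₀² t}` and integrating in time gives both
the monotonicity and the upper bound, the latter even with twice the required factor.
-/

open Real Set Filter MeasureTheory Topology NNReal

/-! ### Geometry of a single convex curve -/

/-- `r` is the curvature function of a smooth simple closed strictly convex curve: smooth, positive,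
`2π`-periodic, and satisfying the closure conditions. -/
structure IsCurvature (r : ℝ → ℝ) : Prop where
  smooth : ContDiff ℝ (⊤ : ℕ∞) r
  pos : ∀ θ, 0 < r θ
  per : ∀ θ, r (θ + 2 * π) = r θ
  cos_eq : (∫ θ in (0:ℝ)..(2 * π), Real.cos θ / r θ) = 0
  sin_eq : (∫ θ in (0:ℝ)..(2 * π), Real.sin θ / r θ) = 0

/-- The height of the point `C(θ)` above the tangent line to the curve at `C(a)`. -/
noncomputable def hgt (r : ℝ → ℝ) (a θ : ℝ) : ℝ :=
  Real.cos a * ((curveP r θ).2 - (curveP r a).2) - Real.sin a * ((curveP r θ).1 - (curveP r a).1)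

namespace IsCurvature

variable {r : ℝ → ℝ}

lemma cont (hr : IsCurvature r) : Continuous r := hr.smooth.continuous

lemma div_cont (hr : IsCurvature r) {f : ℝ → ℝ} (hf : Continuous f) :
    Continuous fun θ => f θ / r θ :=
  hf.div hr.cont fun θ => (hr.pos θ).ne'

lemma curve1_deriv (hr : IsCurvature r) (θ : ℝ) :
    HasDerivAt (fun θ => (curveP r θ).1) (Real.cos θ / r θ) θ :=
  (hr.div_cont Real.continuous_cos).integral_hasStrictDerivAt 0 θ |>.hasDerivAt

lemma curve2_deriv (hr : IsCurvature r) (θ : ℝ) :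
    HasDerivAt (fun θ => (curveP r θ).2) (Real.sin θ / r θ) θ :=
  (hr.div_cont Real.continuous_sin).integral_hasStrictDerivAt 0 θ |>.hasDerivAt

lemma curve1_cont (hr : IsCurvature r) : Continuous fun θ => (curveP r θ).1 :=
  continuous_iff_continuousAt.2 fun θ => (hr.curve1_deriv θ).continuousAt

lemma curve2_cont (hr : IsCurvature r) : Continuous fun θ => (curveP r θ).2 :=
  continuous_iff_continuousAt.2 fun θ => (hr.curve2_deriv θ).continuousAt

lemma curve1_per (hr : IsCurvature r) (θ : ℝ) : (curveP r (θ + 2 * π)).1 = (curveP r θ).1 := by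
  have hc := hr.div_cont Real.continuous_cos
  have hp : Function.Periodic (fun θ => Real.cos θ / r θ) (2 * π) := fun θ => by
    simp [hr.per]
  have h1 := intervalIntegral.integral_add_adjacent_intervals
    (hc.intervalIntegrable (μ := volume) 0 θ) (hc.intervalIntegrable θ (θ + 2 * π))
  have h2 := hp.intervalIntegral_add_eq θ 0
  rw [zero_add, hr.cos_eq] at h2
  simp only [curveP]
  rw [← h1, h2, add_zero]

lemma curve2_per (hr : IsCurvature r) (θ : ℝ) : (curveP r (θ + 2 * π)).2 = (curveP r θ).2 := by
  have hc := hr.div_cont Real.continuous_sin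
  have hp : Function.Periodic (fun θ => Real.sin θ / r θ) (2 * π) := fun θ => by
    simp [hr.per]
  have h1 := intervalIntegral.integral_add_adjacent_intervals
    (hc.intervalIntegrable (μ := volume) 0 θ) (hc.intervalIntegrable θ (θ + 2 * π))
  have h2 := hp.intervalIntegral_add_eq θ 0
  rw [zero_add, hr.sin_eq] at h2
  simp only [curveP]
  rw [← h1, h2, add_zero]

lemma hgt_deriv (hr : IsCurvature r) (a θ : ℝ) :
    HasDerivAt (hgt r a) (Real.sin (θ - a) / r θ) θ := by
  have := (((hr.curve2_deriv θ).sub_const (curveP r a).2).const_mul (Real.cos a)).sub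
    (((hr.curve1_deriv θ).sub_const (curveP r a).1).const_mul (Real.sin a))
  refine this.congr_deriv ?_
  rw [Real.sin_sub]; ring

lemma hgt_cont (hr : IsCurvature r) (a : ℝ) : Continuous (hgt r a) :=
  continuous_iff_continuousAt.2 fun θ => (hr.hgt_deriv a θ).continuousAt

lemma hgt_self (a : ℝ) : hgt r a a = 0 := by simp [hgt]

lemma hgt_end (hr : IsCurvature r) (a : ℝ) : hgt r a (a + 2 * π) = 0 := by
  simp [hgt, hr.curve1_per, hr.curve2_per]

lemma hgt_mono (hr : IsCurvature r) (a : ℝ) : StrictMonoOn (hgt r a) (Icc a (a + π)) := by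
  apply strictMonoOn_of_deriv_pos (convex_Icc _ _) (hr.hgt_cont a).continuousOn
  intro x hx
  rw [interior_Icc] at hx
  rw [(hr.hgt_deriv a x).deriv]
  exact div_pos (Real.sin_pos_of_pos_of_lt_pi (by linarith [hx.1]) (by linarith [hx.2])) (hr.pos x)

lemma hgt_anti (hr : IsCurvature r) (a : ℝ) :
    StrictAntiOn (hgt r a) (Icc (a + π) (a + 2 * π)) := by
  apply strictAntiOn_of_deriv_neg (convex_Icc _ _) (hr.hgt_cont a).continuousOn
  intro x hx
  rw [interior_Icc] at hx
  rw [(hr.hgt_deriv a x).deriv]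
  refine div_neg_of_neg_of_pos ?_ (hr.pos x)
  rw [← Real.sin_sub_two_pi]
  exact Real.sin_neg_of_neg_of_neg_pi_lt (by linarith [hx.2]) (by linarith [hx.1])

lemma hgt_pos (hr : IsCurvature r) {a θ : ℝ} (h : θ ∈ Ioo a (a + 2 * π)) : 0 < hgt r a θ := by
  have hπ := Real.pi_pos
  rcases le_total θ (a + π) with h1 | h1
  · have := hr.hgt_mono a ⟨le_rfl, by linarith⟩ ⟨h.1.le, h1⟩ h.1
    rwa [hgt_self] at this
  · have := hr.hgt_anti a ⟨h1, h.2.le⟩ ⟨by linarith, le_rfl⟩ h.2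
    rwa [hr.hgt_end] at this

lemma hgt_le (hr : IsCurvature r) {a θ : ℝ} (h : θ ∈ Icc a (a + 2 * π)) :
    hgt r a θ ≤ hgt r a (a + π) := by
  have hπ := Real.pi_pos
  rcases le_total θ (a + π) with h1 | h1
  · exact (hr.hgt_mono a).monotoneOn ⟨h.1, h1⟩ ⟨by linarith, le_rfl⟩ h1
  · exact (hr.hgt_anti a).antitoneOn ⟨le_rfl, by linarith⟩ ⟨h1, h.2⟩ h1

lemma hgt_nonneg (hr : IsCurvature r) {a θ : ℝ} (h : θ ∈ Icc a (a + 2 * π)) : 0 ≤ hgt r a θ := by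
  rcases h.1.eq_or_lt with rfl | h1
  · rw [hgt_self]
  rcases h.2.eq_or_lt with rfl | h2
  · rw [hr.hgt_end]
  exact (hr.hgt_pos ⟨h1, h2⟩).le

lemma perim_pos (hr : IsCurvature r) : 0 < perim r := by
  unfold perim
  apply intervalIntegral.intervalIntegral_pos_of_pos_on
    ((hr.div_cont continuous_const).intervalIntegrable _ _)
  · intro x _
    exact one_div_pos.2 (hr.pos x)
  · linarith [Real.pi_pos]

lemma area_integrand_cont (hr : IsCurvature r) :
    Continuous fun θ => ((curveP r θ).1 * Real.sin θ - (curveP r θ).2 * Real.cos θ) / r θ :=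
  hr.div_cont (f := fun θ => (curveP r θ).1 * Real.sin θ - (curveP r θ).2 * Real.cos θ)
    ((hr.curve1_cont.mul Real.continuous_sin).sub (hr.curve2_cont.mul Real.continuous_cos))

/-- The integrand of the area is the height of the base point `C(0)` above the tangent line
at `C(θ)`, divided by `r`, hence positive. -/
lemma encArea_pos (hr : IsCurvature r) : 0 < encArea r := by
  unfold encArea
  refine mul_pos (by norm_num) ?_
  apply intervalIntegral.intervalIntegral_pos_of_pos_on
    (hr.area_integrand_cont.intervalIntegrable _ _)
  · intro x hx
    refine div_pos ?_ (hr.pos x)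
    have h := hr.hgt_pos (a := x) (θ := 0 + 2 * π) ⟨by linarith [hx.2], by linarith [hx.1]⟩
    have e1 : (curveP r 0).1 = 0 := by simp [curveP]
    have e2 : (curveP r 0).2 = 0 := by simp [curveP]
    simp only [hgt, hr.curve1_per, hr.curve2_per, e1, e2] at h
    linarith
  · linarith [Real.pi_pos]

lemma hRatio_pos (hr : IsCurvature r) : 0 < hRatio r := div_pos hr.perim_pos hr.encArea_pos

/-- The curve lies in a strip of width `w = hgt r a (a + π)` parallel to its tangent at `C(a)`.
Measuring heights `Y` from the middle line of the strip, the area is `-∮ (Y - w/2) dX`, hence at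
most `w/2` times the total variation of the other coordinate. -/
lemma encArea_le (hr : IsCurvature r) (a : ℝ) :
    encArea r ≤ hgt r a (a + π) / 2 * ∫ θ in a..(a + 2 * π), |Real.cos (θ - a)| / r θ := by
  have hπ := Real.pi_pos
  set w := hgt r a (a + π) with hw
  set xa := (curveP r a).1 with hxa
  set ya := (curveP r a).2 with hya
  have hca : Continuous fun θ => Real.cos (θ - a) := by fun_prop
  have hp : Function.Periodic (fun θ =>
      ((curveP r θ).1 * Real.sin θ - (curveP r θ).2 * Real.cos θ) / r θ) (2 * π) := fun θ => by
    simp only [hr.curve1_per, hr.curve2_per, hr.per, Real.sin_add_two_pi, Real.cos_add_two_pi]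
  have hci := hr.area_integrand_cont
  have e1 := hp.intervalIntegral_add_eq 0 a
  rw [zero_add] at e1
  -- `X`, the coordinate along the tangent at `C(a)`
  set X : ℝ → ℝ := fun θ => Real.cos a * ((curveP r θ).1 - xa) + Real.sin a * ((curveP r θ).2 - ya)
    with hX
  have hXd : ∀ θ, HasDerivAt X (Real.cos (θ - a) / r θ) θ := fun θ => by
    have := (((hr.curve1_deriv θ).sub_const xa).const_mul (Real.cos a)).add
      (((hr.curve2_deriv θ).sub_const ya).const_mul (Real.sin a))
    refine this.congr_deriv ?_
    rw [Real.cos_sub]; ring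
  set B : ℝ → ℝ := fun θ => X θ * hgt r a θ - w * X θ + xa * (curveP r θ).2 - ya * (curveP r θ).1
    with hB
  have hBd : ∀ θ, HasDerivAt B
      (((curveP r θ).1 * Real.sin θ - (curveP r θ).2 * Real.cos θ) / r θ
        + 2 * ((hgt r a θ - w / 2) * (Real.cos (θ - a) / r θ))) θ := fun θ => by
    have := ((((hXd θ).mul (hr.hgt_deriv a θ)).sub ((hXd θ).const_mul w)).add
      ((hr.curve2_deriv θ).const_mul xa)).sub ((hr.curve1_deriv θ).const_mul ya)
    refine this.congr_deriv ?_
    have hne := (hr.pos θ).ne'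
    simp only [hX, hgt, Real.cos_sub, Real.sin_sub, ← hxa, ← hya]
    field_simp
    have hsc := Real.sin_sq_add_cos_sq a
    linear_combination (-((curveP r θ).1 - xa) * Real.sin θ + ((curveP r θ).2 - ya) * Real.cos θ)
      * (-1) * hsc
  have hBe : B (a + 2 * π) = B a := by
    simp only [hB, hX, hgt, hr.curve1_per, hr.curve2_per]
  have hi2 : Continuous fun θ => 2 * ((hgt r a θ - w / 2) * (Real.cos (θ - a) / r θ)) :=
    continuous_const.mul (((hr.hgt_cont a).sub continuous_const).mul (hr.div_cont hca))
  have e2 := intervalIntegral.integral_eq_sub_of_hasDerivAt (a := a) (b := a + 2 * π)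
    (fun θ _ => hBd θ) ((hci.add hi2).intervalIntegrable _ _)
  rw [intervalIntegral.integral_add (hci.intervalIntegrable _ _) (hi2.intervalIntegrable _ _),
    hBe, sub_self, intervalIntegral.integral_const_mul] at e2
  have e3 : -(∫ θ in a..(a + 2 * π), (hgt r a θ - w / 2) * (Real.cos (θ - a) / r θ))
      ≤ ∫ θ in a..(a + 2 * π), w / 2 * (|Real.cos (θ - a)| / r θ) := by
    rw [← intervalIntegral.integral_neg]
    apply intervalIntegral.integral_mono_on (by linarith)
    · exact ((((hr.hgt_cont a).sub continuous_const).mul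
        (hr.div_cont hca)).neg).intervalIntegrable _ _
    · exact (continuous_const.mul (hr.div_cont hca.abs)).intervalIntegrable _ _
    · intro θ hθ
      have h1 := hr.hgt_nonneg hθ
      have h2 := hr.hgt_le hθ
      have h3 : |hgt r a θ - w / 2| ≤ w / 2 := abs_le.2 ⟨by linarith, by linarith⟩
      calc -((hgt r a θ - w / 2) * (Real.cos (θ - a) / r θ))
          ≤ |(hgt r a θ - w / 2) * (Real.cos (θ - a) / r θ)| := neg_le_abs _
        _ = |hgt r a θ - w / 2| * (|Real.cos (θ - a)| / r θ) := by
          rw [abs_mul, abs_div, abs_of_pos (hr.pos θ)]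
        _ ≤ _ := mul_le_mul_of_nonneg_right h3 (div_nonneg (abs_nonneg _) (hr.pos θ).le)
  rw [intervalIntegral.integral_const_mul] at e3
  unfold encArea
  rw [e1]
  linarith

lemma integral_shift (hr : IsCurvature r) (a : ℝ) :
    (∫ θ in a..(a + 2 * π), 1 / r θ) = perim r := by
  have hp : Function.Periodic (fun θ => 1 / r θ) (2 * π) := fun θ => by simp only [hr.per]
  have := hp.intervalIntegral_add_eq a 0
  rwa [zero_add] at this

/-- The geometric estimate of Gage and Hamilton: the curvature cannot exceed `σ/λ` on an interval of
tangent angles of length `π`, because otherwise the curve would lie in a strip that is too thin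
for its area. -/
lemma exists_le_hRatio (hr : IsCurvature r) (a : ℝ) :
    ∃ θ ∈ Ioo a (a + π), r θ ≤ hRatio r := by
  by_contra! hcon
  have hπ := Real.pi_pos
  have hh := hr.hRatio_pos
  have hsc : Continuous fun θ => Real.sin (θ - a) := by fun_prop
  have hca : Continuous fun θ => Real.cos (θ - a) := by fun_prop
  have hw : hgt r a (a + π) < 2 / hRatio r := by
    have e1 := intervalIntegral.integral_eq_sub_of_hasDerivAt (a := a) (b := a + π)
      (fun θ _ => hr.hgt_deriv a θ) ((hr.div_cont hsc).intervalIntegrable _ _)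
    rw [hgt_self, sub_zero] at e1
    rw [← e1]
    have e2 : ∫ θ in a..(a + π), Real.sin (θ - a) / hRatio r = 2 / hRatio r := by
      rw [intervalIntegral.integral_div,
        intervalIntegral.integral_comp_sub_right (fun x => Real.sin x) a, integral_sin]
      norm_num
    rw [← e2]
    apply intervalIntegral.integral_lt_integral_of_continuousOn_of_le_of_exists_lt (by linarith)
      (hr.div_cont hsc).continuousOn (hsc.div_const _).continuousOn
    · intro x hx
      rcases hx.2.eq_or_lt with rfl | h2
      · simp
      · exact div_le_div_of_nonneg_left (Real.sin_nonneg_of_nonneg_of_le_pi (by linarith [hx.1])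
          (by linarith)) hh (hcon x ⟨hx.1, h2⟩).le
    · refine ⟨a + π / 2, ⟨by linarith, by linarith⟩, ?_⟩
      exact div_lt_div_of_pos_left (by simp) hh (hcon _ ⟨by linarith, by linarith⟩)
  have hI : (∫ θ in a..(a + 2 * π), |Real.cos (θ - a)| / r θ) ≤ perim r := by
    rw [← hr.integral_shift a]
    apply intervalIntegral.integral_mono_on (by linarith)
      ((hr.div_cont hca.abs).intervalIntegrable _ _)
      ((hr.div_cont continuous_const).intervalIntegrable _ _)
    intro x _
    exact div_le_div_of_nonneg_right (Real.abs_cos_le_one _) (hr.pos x).le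
  have hw0 := hr.hgt_nonneg (a := a) (θ := a + π) ⟨by linarith, by linarith⟩
  have h1 := hr.encArea_le a
  have h2 : encArea r ≤ hgt r a (a + π) / 2 * perim r :=
    h1.trans (mul_le_mul_of_nonneg_left hI (by linarith))
  have h3 : hgt r a (a + π) / 2 * perim r < (2 / hRatio r) / 2 * perim r :=
    mul_lt_mul_of_pos_right (by linarith) hr.perim_pos
  have h4 : (2 / hRatio r) / 2 * perim r = encArea r := by
    unfold hRatio
    have := hr.perim_pos.ne'
    have := hr.encArea_pos.ne'
    field_simp
  linarith

/-- A weak isoperimetric inequality, from a bounding box of the curve: the area is at most the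
product of the half-variations of the two coordinates, whose sum is at most `σ/√2`. -/
lemma isoperimetric (hr : IsCurvature r) : 8 * encArea r ≤ perim r ^ 2 := by
  have hπ := Real.pi_pos
  have h1 := hr.encArea_le 0
  simp only [zero_add, sub_zero] at h1
  set w := hgt r 0 π with hw
  set S := ∫ θ in (0:ℝ)..(2 * π), |Real.sin θ| / r θ with hS
  set K := ∫ θ in (0:ℝ)..(2 * π), |Real.cos θ| / r θ with hK
  have hcs := hr.div_cont Real.continuous_sin
  have hcas := hr.div_cont Real.continuous_sin.abs
  have hcac := hr.div_cont Real.continuous_cos.abs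
  have hd : ∀ θ, HasDerivAt (hgt r 0) (Real.sin θ / r θ) θ := fun θ => by
    simpa using hr.hgt_deriv 0 θ
  have hS2 : 2 * w ≤ S := by
    have e1 := intervalIntegral.integral_eq_sub_of_hasDerivAt (a := 0) (b := π)
      (fun θ _ => hd θ) (hcs.intervalIntegrable _ _)
    have e2 := intervalIntegral.integral_eq_sub_of_hasDerivAt (a := π) (b := 2 * π)
      (fun θ _ => hd θ) (hcs.intervalIntegrable _ _)
    have e3 := hr.hgt_end 0
    rw [zero_add] at e3
    rw [hgt_self] at e1
    rw [e3] at e2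
    have e4 := intervalIntegral.integral_add_adjacent_intervals
      (hcas.intervalIntegrable (μ := volume) 0 π) (hcas.intervalIntegrable π (2 * π))
    have b1 := intervalIntegral.norm_integral_le_integral_norm (μ := volume)
      (f := fun θ => Real.sin θ / r θ) hπ.le
    have b2 := intervalIntegral.norm_integral_le_integral_norm (μ := volume)
      (f := fun θ => Real.sin θ / r θ) (a := π) (b := 2 * π) (by linarith)
    simp only [Real.norm_eq_abs, abs_div, abs_of_pos (hr.pos _)] at b1 b2
    rw [e1] at b1
    rw [e2] at b2
    have := le_abs_self (w - 0)
    have := neg_abs_le (0 - w)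
    linarith
  have hw0 : 0 ≤ w := hr.hgt_nonneg (a := 0) (θ := π) ⟨by linarith, by linarith⟩
  have hK0 : 0 ≤ K := intervalIntegral.integral_nonneg (by linarith) fun x _ =>
    div_nonneg (abs_nonneg _) (hr.pos x).le
  have hSK : S + K ≤ √2 * perim r := by
    rw [hS, hK, ← intervalIntegral.integral_add (hcas.intervalIntegrable _ _)
      (hcac.intervalIntegrable _ _)]
    unfold perim
    rw [← intervalIntegral.integral_const_mul]
    apply intervalIntegral.integral_mono_on (by linarith)
      ((hcas.add hcac).intervalIntegrable _ _)
      ((continuous_const.mul (hr.div_cont continuous_const)).intervalIntegrable _ _)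
    intro x _
    change |Real.sin x| / r x + |Real.cos x| / r x ≤ √2 * (1 / r x)
    rw [← add_div, mul_one_div]
    refine div_le_div_of_nonneg_right ?_ (hr.pos x).le
    apply Real.le_sqrt_of_sq_le
    nlinarith [sq_nonneg (|Real.sin x| - |Real.cos x|), Real.sin_sq_add_cos_sq x,
      sq_abs (Real.sin x), sq_abs (Real.cos x)]
  have hsq : (S + K) ^ 2 ≤ 2 * perim r ^ 2 := by
    have := pow_le_pow_left₀ (by linarith) hSK 2
    rwa [mul_pow, Real.sq_sqrt (by norm_num)] at this
  have h2 : w * K ≤ S * K / 2 := by nlinarith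
  nlinarith [sq_nonneg (S - K)]

/-- The Cauchy–Schwarz inequality `(∫ r) (∫ 1/r) ≥ (2π)²`. -/
lemma integral_mul_perim (hr : IsCurvature r) :
    4 * π ^ 2 ≤ (∫ θ in (0:ℝ)..(2 * π), r θ) * perim r := by
  have hπ := Real.pi_pos
  have hσ := hr.perim_pos
  set k := 2 * π / perim r with hk
  have hc : Continuous fun θ => k ^ 2 * (1 / r θ) :=
    continuous_const.mul (hr.div_cont continuous_const)
  have h1 : (∫ θ in (0:ℝ)..(2 * π), (2 * k - k ^ 2 * (1 / r θ))) ≤ ∫ θ in (0:ℝ)..(2 * π), r θ := by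
    apply intervalIntegral.integral_mono_on (by linarith)
      ((continuous_const.sub hc).intervalIntegrable _ _)
      (hr.cont.intervalIntegrable _ _)
    intro x _
    have hx := hr.pos x
    change 2 * k - k ^ 2 * (1 / r x) ≤ r x
    rw [← sub_nonneg]
    have : r x - (2 * k - k ^ 2 * (1 / r x)) = (r x - k) ^ 2 / r x := by field_simp; ring
    rw [this]; positivity
  rw [intervalIntegral.integral_sub (by simp) (hc.intervalIntegrable _ _),
    show (∫ θ in (0:ℝ)..(2 * π), k ^ 2 * (1 / r θ)) = k ^ 2 * perim r from
      intervalIntegral.integral_const_mul _ _, intervalIntegral.integral_const] at h1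
  have h2 : ((2 * π - 0) • (2 * k) - k ^ 2 * perim r) * perim r = 4 * π ^ 2 := by
    rw [hk, smul_eq_mul]; field_simp; ring
  rw [← h2]
  exact mul_le_mul_of_nonneg_right h1 hσ.le

end IsCurvature

/-! ### Wirtinger inequality and entropy dissipation -/

lemma hasDerivAt_max_sq (x : ℝ) : HasDerivAt (fun x : ℝ => (max x 0) ^ 2) (2 * max x 0) x := by
  rcases lt_trichotomy x 0 with h | h | h
  · have : (fun x : ℝ => (max x 0) ^ 2) =ᶠ[𝓝 x] fun _ => 0 := by
      filter_upwards [Iio_mem_nhds h] with y hy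
      rw [max_eq_right (le_of_lt hy)]; simp
    rw [max_eq_right h.le, mul_zero]
    exact (hasDerivAt_const x (0:ℝ)).congr_of_eventuallyEq this
  · subst h
    rw [hasDerivAt_iff_isLittleO]
    simp only [max_self, mul_zero, smul_zero, sub_zero, ne_eq, OfNat.ofNat_ne_zero,
      not_false_eq_true, zero_pow]
    have h1 : (fun x : ℝ => (max x 0) ^ 2) =O[𝓝 0] fun x : ℝ => x ^ 2 := by
      refine Asymptotics.IsBigO.of_bound 1 (Eventually.of_forall fun y => ?_)
      rw [one_mul, norm_pow, norm_pow]
      refine pow_le_pow_left₀ (norm_nonneg _) ?_ 2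
      rw [Real.norm_eq_abs, Real.norm_eq_abs, abs_of_nonneg (le_max_right _ _)]
      exact max_le (le_abs_self _) (abs_nonneg _)
    exact h1.trans_isLittleO (Asymptotics.isLittleO_pow_id one_lt_two)
  · have : (fun x : ℝ => (max x 0) ^ 2) =ᶠ[𝓝 x] fun x => x ^ 2 := by
      filter_upwards [Ioi_mem_nhds h] with y hy
      rw [max_eq_left (le_of_lt hy)]
    rw [max_eq_left h.le]
    refine HasDerivAt.congr_of_eventuallyEq ?_ this
    simpa using hasDerivAt_pow 2 x

/-- A one-sided Wirtinger inequality on an interval shorter than `π`, at whose endpoints `u ≤ 0`.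
With `φ = max u 0` and `m` the midpoint, the integrand is bounded pointwise by the derivative of the
`C¹` function `φ² tan(· - m)`, which vanishes at both endpoints; where `u > 0` the difference is
`(u' + u tan(· - m))² + C`. -/
lemma wirtinger_interval {u u' : ℝ → ℝ} (hu : ∀ x, HasDerivAt u (u' x) x) (hu' : Continuous u')
    {a b C : ℝ} (hab : a ≤ b) (hba : b < a + π) (ha : u a ≤ 0) (hb : u b ≤ 0) (hC : 0 ≤ C)
    (hneg : ∀ x, u x ≤ 0 → u x ^ 2 ≤ C) :
    ∫ x in a..b, (u x ^ 2 - u' x ^ 2 - C) ≤ 0 := by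
  have hcu : Continuous u := continuous_iff_continuousAt.2 fun x => (hu x).continuousAt
  set m := (a + b) / 2 with hm
  have hcos : ∀ x ∈ Icc a b, Real.cos (x - m) ≠ 0 := fun x hx =>
    (Real.cos_pos_of_mem_Ioo ⟨by linarith [hx.1], by linarith [hx.2]⟩).ne'
  have hG : ∀ x ∈ Icc a b, HasDerivAt (fun x => (max (u x) 0) ^ 2 * Real.tan (x - m))
      (2 * max (u x) 0 * u' x * Real.tan (x - m)
        + (max (u x) 0) ^ 2 * (1 / Real.cos (x - m) ^ 2)) x := fun x hx => by
    have h1 := (hasDerivAt_max_sq (u x)).comp x (hu x)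
    have h2 := (Real.hasDerivAt_tan (hcos x hx)).comp_sub_const x m
    exact h1.mul h2
  have key := intervalIntegral.integral_le_sub_of_hasDeriv_right_of_le hab
    (fun x hx => (hG x hx).continuousAt.continuousWithinAt)
    (fun x hx => (hG x (Ioo_subset_Icc_self hx)).hasDerivWithinAt)
    (φ := fun x => u x ^ 2 - u' x ^ 2 - C)
    (((hcu.pow 2).sub (hu'.pow 2)).sub continuous_const).continuousOn.integrableOn_Icc
    (fun x hx => ?_)
  · simpa [max_eq_right ha, max_eq_right hb] using key
  · rcases le_or_gt (u x) 0 with h | h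
    · rw [max_eq_right h]
      have := hneg x h
      nlinarith [sq_nonneg (u' x)]
    · rw [max_eq_left h.le]
      have hc := hcos x (Ioo_subset_Icc_self hx)
      have e : 1 / Real.cos (x - m) ^ 2 = 1 + Real.tan (x - m) ^ 2 := by
        rw [Real.tan_eq_sin_div_cos]
        field_simp
        linarith [Real.sin_sq_add_cos_sq (x - m)]
      rw [e]
      nlinarith [sq_nonneg (u' x + u x * Real.tan (x - m))]

/-- If every open interval of length `π` contains a point where `u ≤ 0`, the one-sided Wirtinger
inequality holds over a full period: the points up to which it holds form a compact set, and its
greatest element can be pushed forward until it reaches the end of the period. -/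
lemma wirtinger_period {u u' : ℝ → ℝ} (hu : ∀ x, HasDerivAt u (u' x) x) (hu' : Continuous u')
    (hper : ∀ x, u (x + 2 * π) = u x) (hz : ∀ a, ∃ x ∈ Ioo a (a + π), u x ≤ 0)
    {C : ℝ} (hC : 0 ≤ C) (hneg : ∀ x, u x ≤ 0 → u x ^ 2 ≤ C) :
    ∫ x in (0:ℝ)..(2 * π), (u x ^ 2 - u' x ^ 2 - C) ≤ 0 := by
  have hπ := Real.pi_pos
  have hcu : Continuous u := continuous_iff_continuousAt.2 fun x => (hu x).continuousAt
  have hper' : ∀ x, u' (x + 2 * π) = u' x := fun x => by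
    have h1 : HasDerivAt (fun y => u (y + 2 * π)) (u' (x + 2 * π)) x :=
      (hu _).comp_add_const x (2 * π)
    simp only [hper] at h1
    exact h1.unique (hu x)
  have hf : Continuous fun x => u x ^ 2 - u' x ^ 2 - C :=
    ((hcu.pow 2).sub (hu'.pow 2)).sub continuous_const
  obtain ⟨z, -, hz0⟩ := hz 0
  have hp : Function.Periodic (fun x => u x ^ 2 - u' x ^ 2 - C) (2 * π) := fun x => by
    simp only [hper, hper']
  have e := hp.intervalIntegral_add_eq 0 z
  rw [zero_add] at e
  rw [e]
  set S : Set ℝ := Icc z (z + 2 * π) ∩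
    {b | u b ≤ 0 ∧ ∫ x in z..b, (u x ^ 2 - u' x ^ 2 - C) ≤ 0} with hS
  have hcI : Continuous fun b => ∫ x in z..b, (u x ^ 2 - u' x ^ 2 - C) :=
    intervalIntegral.continuous_primitive (fun _ _ => hf.intervalIntegrable _ _) z
  have hScomp : IsCompact S := isCompact_Icc.inter_right
    ((isClosed_le hcu continuous_const).inter (isClosed_le hcI continuous_const))
  have hSne : S.Nonempty := ⟨z, ⟨le_rfl, by linarith⟩, hz0, by simp⟩
  obtain ⟨b, ⟨hbI, hub, hIb⟩, hmax⟩ := hScomp.exists_isGreatest hSne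
  have extend : ∀ c, b ≤ c → c < b + π → u c ≤ 0 →
      ∫ x in z..c, (u x ^ 2 - u' x ^ 2 - C) ≤ 0 := fun c h1 h2 h3 => by
    have := wirtinger_interval hu hu' h1 h2 hub h3 hC hneg
    rw [← intervalIntegral.integral_add_adjacent_intervals (hf.intervalIntegrable z b)
      (hf.intervalIntegrable b c)]
    linarith
  have huend : u (z + 2 * π) ≤ 0 := by rw [hper]; exact hz0
  rcases lt_or_ge (z + 2 * π) (b + π) with h | h
  · exact extend _ hbI.2 h huend
  · obtain ⟨c, hc, huc⟩ := hz b
    have := hmax ⟨⟨by linarith [hbI.1, hc.1], by linarith [hc.2]⟩, huc, extend c hc.1.le hc.2 huc⟩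
    linarith [hc.1]

namespace IsCurvature

variable {r : ℝ → ℝ}

lemma deriv1 (hr : IsCurvature r) (θ : ℝ) : HasDerivAt r (deriv r θ) θ :=
  (hr.smooth.differentiable (by simp) θ).hasDerivAt

lemma deriv2 (hr : IsCurvature r) (θ : ℝ) : HasDerivAt (deriv r) (iteratedDeriv 2 r θ) θ := by
  have h : ContDiff ℝ 1 (deriv r) := by
    have := (contDiff_infty_iff_deriv.1 hr.smooth).2
    exact this.of_le (by exact_mod_cast le_top)
  have := (h.differentiable (by simp) θ).hasDerivAt
  rwa [iteratedDeriv_succ, iteratedDeriv_one]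

lemma cont1 (hr : IsCurvature r) : Continuous (deriv r) :=
  continuous_iff_continuousAt.2 fun θ => (hr.deriv2 θ).continuousAt

lemma cont2 (hr : IsCurvature r) : Continuous (iteratedDeriv 2 r) :=
  hr.smooth.continuous_iteratedDeriv 2 (by norm_cast)

lemma per1 (hr : IsCurvature r) (θ : ℝ) : deriv r (θ + 2 * π) = deriv r θ := by
  have h1 : HasDerivAt (fun y => r (y + 2 * π)) (deriv r (θ + 2 * π)) θ :=
    (hr.deriv1 _).comp_add_const θ (2 * π)
  simp only [hr.per] at h1
  exact h1.unique (hr.deriv1 θ)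

/-- Entropy dissipation: the Wirtinger inequality applied to `u = r - σ/λ`. -/
lemma dissipation (hr : IsCurvature r) {m : ℝ} (hm : 0 < m) (hmr : ∀ θ, m ≤ r θ) :
    ∫ θ in (0:ℝ)..(2 * π), (r θ * iteratedDeriv 2 r θ + r θ * (r θ - 2 * hRatio r))
      ≤ -(2 * π * m ^ 2) := by
  have hπ := Real.pi_pos
  set h := hRatio r with hh
  have hmh : m ≤ h := by
    obtain ⟨θ, -, hθ⟩ := hr.exists_le_hRatio 0
    exact (hmr θ).trans hθ
  have hw := wirtinger_period (u := fun θ => r θ - h) (u' := deriv r) (C := (h - m) ^ 2)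
    (fun x => (hr.deriv1 x).sub_const h) hr.cont1 (fun x => by simp only [hr.per])
    (fun a => by
      obtain ⟨θ, h1, h2⟩ := hr.exists_le_hRatio a
      exact ⟨θ, h1, by linarith⟩) (sq_nonneg _)
    (fun x hx => by nlinarith [hmr x])
  have hB : ∀ θ, HasDerivAt (fun θ => r θ * deriv r θ)
      (deriv r θ * deriv r θ + r θ * iteratedDeriv 2 r θ) θ := fun θ =>
    (hr.deriv1 θ).mul (hr.deriv2 θ)
  have hcr := hr.cont
  have hc1 := hr.cont1
  have hc2 := hr.cont2
  have e := intervalIntegral.integral_eq_sub_of_hasDerivAt (a := 0) (b := 2 * π)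
    (fun θ _ => hB θ) (Continuous.intervalIntegrable (by fun_prop) _ _)
  have p0 := hr.per 0
  have p1 := hr.per1 0
  rw [zero_add] at p0 p1
  rw [p0, p1, sub_self] at e
  have e2 : ∫ θ in (0:ℝ)..(2 * π), (r θ * iteratedDeriv 2 r θ + r θ * (r θ - 2 * h))
      = (∫ x in (0:ℝ)..(2 * π), ((r x - h) ^ 2 - deriv r x ^ 2 - (h - m) ^ 2))
        + (∫ x in (0:ℝ)..(2 * π), (deriv r x * deriv r x + r x * iteratedDeriv 2 r x))
        + ∫ _ in (0:ℝ)..(2 * π), ((h - m) ^ 2 - h ^ 2) := by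
    rw [← intervalIntegral.integral_add (Continuous.intervalIntegrable (by fun_prop) _ _)
      (Continuous.intervalIntegrable (by fun_prop) _ _),
      ← intervalIntegral.integral_add (Continuous.intervalIntegrable (by fun_prop) _ _)
      (Continuous.intervalIntegrable (by fun_prop) _ _)]
    congr 1; ext x; ring
  rw [e2, e, intervalIntegral.integral_const, smul_eq_mul]
  nlinarith [mul_nonneg hπ.le (mul_nonneg hm.le (sub_nonneg.2 hmh))]

/-- The first variation of the perimeter under a normal speed `r - 2h`. -/
lemma perim_variation (hr : IsCurvature r) (h : ℝ) :
    ∫ θ in (0:ℝ)..(2 * π), -(iteratedDeriv 2 r θ + (r θ - 2 * h))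
      = -(∫ θ in (0:ℝ)..(2 * π), r θ) + 4 * π * h := by
  have hcr := hr.cont
  have hc2 := hr.cont2
  have e := intervalIntegral.integral_eq_sub_of_hasDerivAt (a := 0) (b := 2 * π)
    (fun θ _ => hr.deriv2 θ) (Continuous.intervalIntegrable (by fun_prop) _ _)
  have p1 := hr.per1 0
  rw [zero_add] at p1
  rw [p1, sub_self] at e
  rw [intervalIntegral.integral_neg, intervalIntegral.integral_add
    (Continuous.intervalIntegrable (by fun_prop) _ _)
    (Continuous.intervalIntegrable (by fun_prop) _ _), e, intervalIntegral.integral_sub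
    (Continuous.intervalIntegrable (by fun_prop) _ _) (by simp), intervalIntegral.integral_const,
    smul_eq_mul]
  ring

/-- The first variation of twice the area under a normal speed `V = r - 2h`: after integration by
parts it equals `-2 ∮ V ds`. -/
lemma area_variation (hr : IsCurvature r) (h : ℝ) :
    ∫ θ in (0:ℝ)..(2 * π),
      (((∫ β in (0:ℝ)..θ, Real.cos β * -(iteratedDeriv 2 r β + (r β - 2 * h))) * Real.sin θ
        - (∫ β in (0:ℝ)..θ, Real.sin β * -(iteratedDeriv 2 r β + (r β - 2 * h))) * Real.cos θ)
          * (1 / r θ)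
        + ((curveP r θ).1 * Real.sin θ - (curveP r θ).2 * Real.cos θ)
          * -(iteratedDeriv 2 r θ + (r θ - 2 * h)))
      = -(4 * π) + 4 * h * perim r := by
  have hcr := hr.cont
  have hc1 := hr.cont1
  have hc2 := hr.cont2
  have hx := hr.curve1_cont
  have hy := hr.curve2_cont
  have hg : Continuous fun θ => 1 / r θ := hr.div_cont continuous_const
  have ex : ∀ θ, (∫ β in (0:ℝ)..θ, Real.cos β * -(iteratedDeriv 2 r β + (r β - 2 * h)))
      = -(deriv r θ * Real.cos θ + (r θ - 2 * h) * Real.sin θ) + deriv r 0 := fun θ => by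
    have hd : ∀ β, HasDerivAt
        (fun β => -(deriv r β * Real.cos β + (r β - 2 * h) * Real.sin β))
        (Real.cos β * -(iteratedDeriv 2 r β + (r β - 2 * h))) β := fun β => by
      refine (((hr.deriv2 β).mul (Real.hasDerivAt_cos β)).add
        (((hr.deriv1 β).sub_const (2 * h)).mul (Real.hasDerivAt_sin β))).neg.congr_deriv ?_
      ring
    rw [intervalIntegral.integral_eq_sub_of_hasDerivAt (fun β _ => hd β)
      (Continuous.intervalIntegrable (by fun_prop) _ _)]
    simp
  have ey : ∀ θ, (∫ β in (0:ℝ)..θ, Real.sin β * -(iteratedDeriv 2 r β + (r β - 2 * h)))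
      = -(deriv r θ * Real.sin θ - (r θ - 2 * h) * Real.cos θ) - (r 0 - 2 * h) := fun θ => by
    have hd : ∀ β, HasDerivAt
        (fun β => -(deriv r β * Real.sin β - (r β - 2 * h) * Real.cos β))
        (Real.sin β * -(iteratedDeriv 2 r β + (r β - 2 * h))) β := fun β => by
      refine (((hr.deriv2 β).mul (Real.hasDerivAt_sin β)).sub
        (((hr.deriv1 β).sub_const (2 * h)).mul (Real.hasDerivAt_cos β))).neg.congr_deriv ?_
      ring
    rw [intervalIntegral.integral_eq_sub_of_hasDerivAt (fun β _ => hd β)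
      (Continuous.intervalIntegrable (by fun_prop) _ _)]
    simp
  -- The support function is `p = x sin θ - y cos θ`, with derivative `q = x cos θ + y sin θ`.
  set B : ℝ → ℝ := fun θ => deriv r 0 * (curveP r θ).2 + (r 0 - 2 * h) * (curveP r θ).1
    - ((curveP r θ).1 * Real.sin θ - (curveP r θ).2 * Real.cos θ) * deriv r θ
    + ((curveP r θ).1 * Real.cos θ + (curveP r θ).2 * Real.sin θ) * (r θ - 2 * h) with hB
  have hBd : ∀ θ, HasDerivAt B
      ((((∫ β in (0:ℝ)..θ, Real.cos β * -(iteratedDeriv 2 r β + (r β - 2 * h))) * Real.sin θ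
        - (∫ β in (0:ℝ)..θ, Real.sin β * -(iteratedDeriv 2 r β + (r β - 2 * h))) * Real.cos θ)
          * (1 / r θ)
        + ((curveP r θ).1 * Real.sin θ - (curveP r θ).2 * Real.cos θ)
          * -(iteratedDeriv 2 r θ + (r θ - 2 * h)))
        + (2 - 4 * h * (1 / r θ))) θ := fun θ => by
    have d1 := hr.curve1_deriv θ
    have d2 := hr.curve2_deriv θ
    have ds := Real.hasDerivAt_sin θ
    have dc := Real.hasDerivAt_cos θ
    refine ((((d2.const_mul (deriv r 0)).add (d1.const_mul (r 0 - 2 * h))).sub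
      (((d1.mul ds).sub (d2.mul dc)).mul (hr.deriv2 θ))).add
      (((d1.mul dc).add (d2.mul ds)).mul ((hr.deriv1 θ).sub_const (2 * h)))).congr_deriv ?_
    rw [ex, ey]
    simp only [Pi.mul_apply, Pi.add_apply, Pi.sub_apply]
    have hne := (hr.pos θ).ne'
    field_simp
    linear_combination (2 * (r θ - 2 * h)) * Real.sin_sq_add_cos_sq θ
  have hcint : Continuous fun θ =>
      ((∫ β in (0:ℝ)..θ, Real.cos β * -(iteratedDeriv 2 r β + (r β - 2 * h))) * Real.sin θ
        - (∫ β in (0:ℝ)..θ, Real.sin β * -(iteratedDeriv 2 r β + (r β - 2 * h))) * Real.cos θ)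
          * (1 / r θ)
        + ((curveP r θ).1 * Real.sin θ - (curveP r θ).2 * Real.cos θ)
          * -(iteratedDeriv 2 r θ + (r θ - 2 * h)) := by
    simp only [ex, ey]
    fun_prop
  have hcg : Continuous fun θ => 4 * h * (1 / r θ) := by fun_prop
  have hcg2 : Continuous fun θ => 2 - 4 * h * (1 / r θ) := by fun_prop
  have e := intervalIntegral.integral_eq_sub_of_hasDerivAt (a := 0) (b := 2 * π)
    (fun θ _ => hBd θ) ((hcint.add hcg2).intervalIntegrable _ _)
  have hB0 : B (2 * π) = B 0 := by
    have p0 := hr.per 0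
    have p1 := hr.per1 0
    have p2 := hr.curve1_per 0
    have p3 := hr.curve2_per 0
    rw [zero_add] at p0 p1 p2 p3
    simp only [hB, p0, p1, p2, p3, Real.sin_two_pi, Real.cos_two_pi, Real.sin_zero, Real.cos_zero]
  rw [intervalIntegral.integral_add (hcint.intervalIntegrable _ _) (hcg2.intervalIntegrable _ _),
    hB0, sub_self, intervalIntegral.integral_sub (by simp) (hcg.intervalIntegrable _ _),
    show (∫ θ in (0:ℝ)..(2 * π), 4 * h * (1 / r θ)) = 4 * h * perim r from
      intervalIntegral.integral_const_mul _ _, intervalIntegral.integral_const, smul_eq_mul] at e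
  linarith

end IsCurvature

/-! ### Differentiation and continuity of integrals depending on time -/

lemma hasDerivAt_integral_of_bound {F F' : ℝ → ℝ → ℝ} {t ε M b : ℝ} (hε : 0 < ε) (hb : 0 ≤ b)
    (hF : ∀ s ∈ Metric.ball t ε, Continuous (F s)) (hF' : Continuous (F' t))
    (hM : ∀ s ∈ Metric.ball t ε, ∀ θ ∈ Icc 0 b, |F' s θ| ≤ M)
    (hd : ∀ s ∈ Metric.ball t ε, ∀ θ ∈ Icc 0 b, HasDerivAt (fun s => F s θ) (F' s θ) s) :
    HasDerivAt (fun s => ∫ θ in (0:ℝ)..b, F s θ) (∫ θ in (0:ℝ)..b, F' t θ) t := by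
  have hI : ∀ θ ∈ Set.uIoc 0 b, θ ∈ Icc 0 b := fun θ hθ => by
    rw [uIoc_of_le hb] at hθ
    exact Ioc_subset_Icc_self hθ
  refine (intervalIntegral.hasDerivAt_integral_of_dominated_loc_of_deriv_le
    (bound := fun _ => M) (Metric.ball_mem_nhds t hε) ?_
    ((hF t (Metric.mem_ball_self hε)).intervalIntegrable _ _)
    hF'.aestronglyMeasurable ?_ (by simp) ?_).2
  · filter_upwards [Metric.ball_mem_nhds t hε] with s hs
    exact (hF s hs).aestronglyMeasurable
  · exact Eventually.of_forall fun θ hθ s hs => hM s hs θ (hI θ hθ)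
  · exact Eventually.of_forall fun θ hθ s hs => hd s hs θ (hI θ hθ)

lemma continuousWithinAt_integral_of_bound {F : ℝ → ℝ → ℝ} {t M b : ℝ} {D U : Set ℝ} (hb : 0 ≤ b)
    (hU : U ∈ 𝓝[D] t) (hF : ∀ s ∈ U, Continuous (F s))
    (hM : ∀ s ∈ U, ∀ θ ∈ Icc 0 b, |F s θ| ≤ M)
    (hc : ∀ θ ∈ Icc 0 b, ContinuousWithinAt (fun s => F s θ) D t) :
    ContinuousWithinAt (fun s => ∫ θ in (0:ℝ)..b, F s θ) D t := by
  have hI : ∀ θ ∈ Set.uIoc 0 b, θ ∈ Icc 0 b := fun θ hθ => by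
    rw [uIoc_of_le hb] at hθ
    exact Ioc_subset_Icc_self hθ
  refine intervalIntegral.continuousWithinAt_of_dominated_interval (bound := fun _ => M)
    ?_ ?_ (by simp) ?_
  · filter_upwards [hU] with s hs
    exact (hF s hs).aestronglyMeasurable
  · filter_upwards [hU] with s hs
    exact Eventually.of_forall fun θ hθ => hM s hs θ (hI θ hθ)
  · exact Eventually.of_forall fun θ hθ => hc θ (hI θ hθ)

/-- A crude bound on `∫₀^θ f` for `|f| ≤ M` on `[0, 2π]`. -/
lemma abs_integral_le_of_bound {f : ℝ → ℝ} {M θ : ℝ} (hθ : θ ∈ Icc 0 (2 * π))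
    (hM : ∀ β ∈ Icc 0 (2 * π), |f β| ≤ M) : |∫ β in (0:ℝ)..θ, f β| ≤ M * (2 * π) := by
  have h0 : 0 ≤ M := (abs_nonneg _).trans (hM θ hθ)
  have := intervalIntegral.norm_integral_le_of_norm_le_const (a := 0) (b := θ) (f := f) (C := M)
    (fun x hx => by
      rw [uIoc_of_le hθ.1] at hx
      exact hM x ⟨hx.1.le, hx.2.trans hθ.2⟩)
  rw [sub_zero, abs_of_nonneg hθ.1] at this
  exact this.trans (mul_le_mul_of_nonneg_left hθ.2 h0)

/-! ### Evolution equations along the flow -/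

/-- The quantity `ρ'' + ρ - 2h`; along the flow `∂ₜρ = ρ² · speedK`. -/
noncomputable def speedK (r : ℝ → ℝ) (θ : ℝ) : ℝ := iteratedDeriv 2 r θ + (r θ - 2 * hRatio r)

lemma IsCurvature.speedK_cont {r : ℝ → ℝ} (hr : IsCurvature r) : Continuous (speedK r) :=
  hr.cont2.add (hr.cont.sub continuous_const)

namespace IsRCFSolution

variable {T : ℝ} {ρ : ℝ → ℝ → ℝ}

lemma curv (hρ : IsRCFSolution T ρ) {t : ℝ} (ht : t ∈ Ico 0 T) : IsCurvature (ρ t) where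
  smooth := hρ.1.comp_contDiff (f := fun θ => (t, θ)) (by fun_prop) fun θ => ⟨ht, trivial⟩
  pos := hρ.2.1 t ht
  per := hρ.2.2.1 t ht
  cos_eq := hρ.2.2.2.1 t ht
  sin_eq := hρ.2.2.2.2.1 t ht

lemma time_deriv (hρ : IsRCFSolution T ρ) {t : ℝ} (ht : t ∈ Ioo 0 T) (θ : ℝ) :
    HasDerivAt (fun s => ρ s θ) (ρ t θ ^ 2 * speedK (ρ t) θ) t := by
  have := (hρ.2.2.2.2.2 t (Ioo_subset_Ico_self ht) θ).hasDerivAt (Ico_mem_nhds ht.1 ht.2)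
  rwa [← mul_add] at this

lemma recip_deriv (hρ : IsRCFSolution T ρ) {t : ℝ} (ht : t ∈ Ioo 0 T) (θ : ℝ) :
    HasDerivAt (fun s => 1 / ρ s θ) (-speedK (ρ t) θ) t := by
  have hne := ((hρ.curv (Ioo_subset_Ico_self ht)).pos θ).ne'
  have := (hρ.time_deriv ht θ).inv hne
  simp only [one_div]
  refine this.congr_deriv ?_
  field_simp

lemma log_deriv (hρ : IsRCFSolution T ρ) {t : ℝ} (ht : t ∈ Ioo 0 T) (θ : ℝ) :
    HasDerivAt (fun s => Real.log (ρ s θ)) (ρ t θ * speedK (ρ t) θ) t := by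
  have hne := ((hρ.curv (Ioo_subset_Ico_self ht)).pos θ).ne'
  refine ((hρ.time_deriv ht θ).log hne).congr_deriv ?_
  field_simp

lemma local_bounds (hρ : IsRCFSolution T ρ) {t : ℝ} (ht : t ∈ Ioo 0 T) :
    ∃ ε > 0, ∃ M : ℝ, ∀ s ∈ Metric.ball t ε, s ∈ Ioo 0 T ∧ ∀ θ ∈ Icc 0 (2 * π),
      |1 / ρ s θ| ≤ M ∧ |speedK (ρ s) θ| ≤ M ∧ |ρ s θ * speedK (ρ s) θ| ≤ M := by
  obtain ⟨ε, hε, hεs⟩ := Metric.nhds_basis_closedBall.mem_iff.1 (Ioo_mem_nhds ht.1 ht.2)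
  have hopen : IsOpen (Ioo 0 T ×ˢ (univ : Set ℝ)) := isOpen_Ioo.prod isOpen_univ
  have hcd : ContDiffOn ℝ (⊤ : ℕ∞) (Function.uncurry ρ) (Ioo 0 T ×ˢ (univ : Set ℝ)) :=
    hρ.1.mono (prod_mono Ioo_subset_Ico_self le_rfl)
  have hD : ContinuousOn (fun p : ℝ × ℝ => fderiv ℝ (Function.uncurry ρ) p (1, 0))
      (Ioo 0 T ×ˢ (univ : Set ℝ)) :=
    (hcd.continuousOn_fderiv_of_isOpen hopen (by norm_cast)).clm_apply continuousOn_const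
  have hDe : ∀ s ∈ Ioo 0 T, ∀ θ,
      fderiv ℝ (Function.uncurry ρ) (s, θ) (1, 0) = ρ s θ ^ 2 * speedK (ρ s) θ := by
    intro s hs θ
    have h1 : HasFDerivAt (Function.uncurry ρ) (fderiv ℝ (Function.uncurry ρ) (s, θ)) (s, θ) :=
      ((hcd.differentiableOn (by simp)).differentiableAt
        (hopen.mem_nhds ⟨hs, trivial⟩)).hasFDerivAt
    have h2 : HasDerivAt (fun s : ℝ => (s, θ)) ((1 : ℝ), (0 : ℝ)) s :=
      (hasDerivAt_id s).prodMk (hasDerivAt_const s θ)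
    have h3 := HasFDerivAt.comp_hasDerivAt (l := Function.uncurry ρ) (f := fun s : ℝ => (s, θ))
      s h1 h2
    exact HasDerivAt.unique (f := fun s => ρ s θ) h3 (hρ.time_deriv hs θ)
  have hρc : ContinuousOn (fun p : ℝ × ℝ => ρ p.1 p.2) (Ioo 0 T ×ˢ (univ : Set ℝ)) :=
    hcd.continuousOn
  have hne : ∀ p ∈ Ioo 0 T ×ˢ (univ : Set ℝ), ρ p.1 p.2 ≠ 0 := fun p hp =>
    ((hρ.curv (Ioo_subset_Ico_self hp.1)).pos p.2).ne'
  have hsub : Metric.closedBall t ε ×ˢ Icc 0 (2 * π) ⊆ Ioo 0 T ×ˢ (univ : Set ℝ) :=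
    prod_mono hεs (subset_univ _)
  have hcomp : IsCompact (Metric.closedBall t ε ×ˢ Icc 0 (2 * π)) :=
    (isCompact_closedBall t ε).prod isCompact_Icc
  obtain ⟨M1, hM1⟩ := hcomp.exists_bound_of_continuousOn
    ((continuousOn_const (c := (1:ℝ))).div hρc hne |>.mono hsub)
  obtain ⟨M2, hM2⟩ := hcomp.exists_bound_of_continuousOn
    ((hD.div (hρc.pow 2) (fun p hp => pow_ne_zero 2 (hne p hp))).mono hsub)
  obtain ⟨M3, hM3⟩ := hcomp.exists_bound_of_continuousOn ((hD.div hρc hne).mono hsub)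
  refine ⟨ε, hε, max M1 (max M2 M3), fun s hs => ?_⟩
  have hs' := Metric.ball_subset_closedBall hs
  refine ⟨hεs hs', fun θ hθ => ?_⟩
  have hn : ρ s θ ≠ 0 := hne (s, θ) ⟨hεs hs', trivial⟩
  have b1 : |1 / ρ s θ| ≤ M1 := hM1 (s, θ) ⟨hs', hθ⟩
  have b2 : |fderiv ℝ (Function.uncurry ρ) (s, θ) (1, 0) / ρ s θ ^ 2| ≤ M2 := hM2 (s, θ) ⟨hs', hθ⟩
  have b3 : |fderiv ℝ (Function.uncurry ρ) (s, θ) (1, 0) / ρ s θ| ≤ M3 := hM3 (s, θ) ⟨hs', hθ⟩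
  have e2 : ρ s θ ^ 2 * speedK (ρ s) θ / ρ s θ ^ 2 = speedK (ρ s) θ := by field_simp
  have e3 : ρ s θ ^ 2 * speedK (ρ s) θ / ρ s θ = ρ s θ * speedK (ρ s) θ := by field_simp
  rw [hDe s (hεs hs') θ, e2] at b2
  rw [hDe s (hεs hs') θ, e3] at b3
  exact ⟨b1.trans (le_max_left _ _), b2.trans ((le_max_left _ _).trans (le_max_right _ _)),
    b3.trans ((le_max_right _ _).trans (le_max_right _ _))⟩

lemma perim_deriv (hρ : IsRCFSolution T ρ) {t : ℝ} (ht : t ∈ Ioo 0 T) :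
    HasDerivAt (fun s => perim (ρ s))
      (-(∫ θ in (0:ℝ)..(2 * π), ρ t θ) + 4 * π * hRatio (ρ t)) t := by
  obtain ⟨ε, hε, M, hM⟩ := hρ.local_bounds ht
  have hr := hρ.curv (Ioo_subset_Ico_self ht)
  rw [← hr.perim_variation]
  refine hasDerivAt_integral_of_bound (M := M) (F := fun s θ => 1 / ρ s θ)
    (F' := fun s θ => -speedK (ρ s) θ)
    hε (by positivity) (fun s hs => ?_) hr.speedK_cont.neg
    (fun s hs θ hθ => ?_) (fun s hs θ _ => hρ.recip_deriv (hM s hs).1 θ)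
  · exact (hρ.curv (Ioo_subset_Ico_self (hM s hs).1)).div_cont continuous_const
  · rw [abs_neg]; exact ((hM s hs).2 θ hθ).2.1

lemma ent_deriv (hρ : IsRCFSolution T ρ) {t : ℝ} (ht : t ∈ Ioo 0 T) :
    HasDerivAt (fun s => ∫ θ in (0:ℝ)..(2 * π), Real.log (ρ s θ))
      (∫ θ in (0:ℝ)..(2 * π), ρ t θ * speedK (ρ t) θ) t := by
  obtain ⟨ε, hε, M, hM⟩ := hρ.local_bounds ht
  have hr := hρ.curv (Ioo_subset_Ico_self ht)
  refine hasDerivAt_integral_of_bound (M := M) (F := fun s θ => Real.log (ρ s θ))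
    (F' := fun s θ => ρ s θ * speedK (ρ s) θ)
    hε (by positivity) (fun s hs => ?_) (hr.cont.mul hr.speedK_cont)
    (fun s hs θ hθ => ((hM s hs).2 θ hθ).2.2) (fun s hs θ _ => hρ.log_deriv (hM s hs).1 θ)
  have hs := hρ.curv (Ioo_subset_Ico_self (hM s hs).1)
  exact hs.cont.log fun θ => (hs.pos θ).ne'

/-- Differentiation in time of `∫₀^θ f/ρ` for a weight `f` bounded by `1`, given the bounds of
`local_bounds` near `t`. -/
lemma weight_deriv (hρ : IsRCFSolution T ρ) {t ε M θ : ℝ} (hε : 0 < ε)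
    (hM : ∀ s ∈ Metric.ball t ε, s ∈ Ioo 0 T ∧ ∀ θ ∈ Icc 0 (2 * π),
      |1 / ρ s θ| ≤ M ∧ |speedK (ρ s) θ| ≤ M ∧ |ρ s θ * speedK (ρ s) θ| ≤ M)
    {f : ℝ → ℝ} (hf : Continuous f) (hf1 : ∀ x, |f x| ≤ 1) (hθ : θ ∈ Icc 0 (2 * π)) :
    HasDerivAt (fun s => ∫ β in (0:ℝ)..θ, f β / ρ s β)
      (∫ β in (0:ℝ)..θ, f β * -speedK (ρ t) β) t := by
  have ht := (hM t (Metric.mem_ball_self hε)).1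
  have hr := hρ.curv (Ioo_subset_Ico_self ht)
  refine hasDerivAt_integral_of_bound (M := M) (F := fun s β => f β / ρ s β)
    (F' := fun s β => f β * -speedK (ρ s) β)
    hε hθ.1 (fun s hs => ?_) (hf.mul hr.speedK_cont.neg)
    (fun s hs β hβ => ?_) (fun s hs β _ => ?_)
  · exact (hρ.curv (Ioo_subset_Ico_self (hM s hs).1)).div_cont hf
  · rw [abs_mul, abs_neg]
    exact (mul_le_of_le_one_left (abs_nonneg _) (hf1 β)).trans
      ((hM s hs).2 β ⟨hβ.1, hβ.2.trans hθ.2⟩).2.1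
  · have := (hρ.recip_deriv (hM s hs).1 β).const_mul (f β)
    simpa only [mul_one_div] using this

lemma encArea_deriv (hρ : IsRCFSolution T ρ) {t : ℝ} (ht : t ∈ Ioo 0 T) :
    HasDerivAt (fun s => encArea (ρ s)) (-(2 * π) + 2 * hRatio (ρ t) * perim (ρ t)) t := by
  obtain ⟨ε, hε, M, hM⟩ := hρ.local_bounds ht
  have hr := hρ.curv (Ioo_subset_Ico_self ht)
  have e : -(2 * π) + 2 * hRatio (ρ t) * perim (ρ t)
      = 1 / 2 * (-(4 * π) + 4 * hRatio (ρ t) * perim (ρ t)) := by ring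
  rw [e, ← hr.area_variation]
  refine HasDerivAt.const_mul (1 / 2) ?_
  have hball : ∀ s ∈ Metric.ball t ε, ∃ δ > 0, ∀ u ∈ Metric.ball s δ, u ∈ Ioo 0 T ∧
      ∀ θ ∈ Icc 0 (2 * π),
      |1 / ρ u θ| ≤ M ∧ |speedK (ρ u) θ| ≤ M ∧ |ρ u θ * speedK (ρ u) θ| ≤ M := fun s hs => by
    obtain ⟨δ, hδ, hsub⟩ := Metric.isOpen_iff.1 Metric.isOpen_ball s hs
    exact ⟨δ, hδ, fun u hu => hM u (hsub hu)⟩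
  refine hasDerivAt_integral_of_bound (M := 8 * π * M * M) (F := fun s θ =>
      ((curveP (ρ s) θ).1 * Real.sin θ - (curveP (ρ s) θ).2 * Real.cos θ) / ρ s θ)
    (F' := fun s θ =>
      ((∫ β in (0:ℝ)..θ, Real.cos β * -speedK (ρ s) β) * Real.sin θ
        - (∫ β in (0:ℝ)..θ, Real.sin β * -speedK (ρ s) β) * Real.cos θ) * (1 / ρ s θ)
        + ((curveP (ρ s) θ).1 * Real.sin θ - (curveP (ρ s) θ).2 * Real.cos θ)
          * -speedK (ρ s) θ)
    hε (by positivity) (fun s hs => ?_) ?_ (fun s hs θ hθ => ?_) (fun s hs θ hθ => ?_)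
  · exact (hρ.curv (Ioo_subset_Ico_self (hM s hs).1)).area_integrand_cont
  · have h1 := hr.speedK_cont
    have h2 := hr.curve1_cont
    have h3 := hr.curve2_cont
    have h4 : Continuous fun θ => 1 / ρ t θ := hr.div_cont continuous_const
    have h5 : Continuous fun θ => ∫ β in (0:ℝ)..θ, Real.cos β * -speedK (ρ t) β :=
      intervalIntegral.continuous_primitive
        (fun _ _ => Continuous.intervalIntegrable (by fun_prop) _ _) 0
    have h6 : Continuous fun θ => ∫ β in (0:ℝ)..θ, Real.sin β * -speedK (ρ t) β :=
      intervalIntegral.continuous_primitive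
        (fun _ _ => Continuous.intervalIntegrable (by fun_prop) _ _) 0
    fun_prop
  · have hb := (hM s hs).2
    have hM0 : 0 ≤ M := (abs_nonneg _).trans (hb θ hθ).1
    have hπ := Real.pi_pos
    have w1 : ∀ (f k : ℝ → ℝ), (∀ x, |f x| ≤ 1) → (∀ β ∈ Icc 0 (2 * π), |k β| ≤ M) →
        |∫ β in (0:ℝ)..θ, f β * k β| ≤ M * (2 * π) := fun f k hf hk =>
      abs_integral_le_of_bound hθ fun β hβ => by
        rw [abs_mul]
        exact (mul_le_of_le_one_left (abs_nonneg _) (hf β)).trans (hk β hβ)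
    have w2 : ∀ (x y A B : ℝ), |x| ≤ B → |y| ≤ B → |A| ≤ M →
        |(x * Real.sin θ - y * Real.cos θ) * A| ≤ 2 * B * M := fun x y A B hx hy hA => by
      rw [abs_mul]
      have hB : 0 ≤ B := (abs_nonneg _).trans hx
      refine mul_le_mul ?_ hA (abs_nonneg _) (by linarith)
      refine (abs_sub _ _).trans ?_
      rw [abs_mul, abs_mul]
      have := mul_le_mul hx (Real.abs_sin_le_one θ) (abs_nonneg _) hB
      have := mul_le_mul hy (Real.abs_cos_le_one θ) (abs_nonneg _) hB
      linarith
    have c1 : |(curveP (ρ s) θ).1| ≤ M * (2 * π) := by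
      have := w1 Real.cos (fun β => 1 / ρ s β) Real.abs_cos_le_one fun β hβ => (hb β hβ).1
      simp only [mul_one_div] at this
      exact this
    have c2 : |(curveP (ρ s) θ).2| ≤ M * (2 * π) := by
      have := w1 Real.sin (fun β => 1 / ρ s β) Real.abs_sin_le_one fun β hβ => (hb β hβ).1
      simp only [mul_one_div] at this
      exact this
    have hk : ∀ β ∈ Icc 0 (2 * π), |(-speedK (ρ s) β)| ≤ M := fun β hβ => by
      rw [abs_neg]; exact (hb β hβ).2.1
    refine (abs_add_le _ _).trans ?_
    have t1 := w2 _ _ _ _ (w1 Real.cos _ Real.abs_cos_le_one hk)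
      (w1 Real.sin _ Real.abs_sin_le_one hk) (hb θ hθ).1
    have t2 := w2 _ _ _ _ c1 c2 (hk θ hθ)
    linarith
  · obtain ⟨δ, hδ, hδM⟩ := hball s hs
    have d1 := hρ.weight_deriv hδ hδM Real.continuous_cos Real.abs_cos_le_one hθ
    have d2 := hρ.weight_deriv hδ hδM Real.continuous_sin Real.abs_sin_le_one hθ
    have d3 := hρ.recip_deriv (hM s hs).1 θ
    have := ((d1.mul_const (Real.sin θ)).sub (d2.mul_const (Real.cos θ))).mul d3
    exact this.congr_of_eventuallyEq (Eventually.of_forall fun u => div_eq_mul_one_div _ _)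

/-! ### Continuity up to the initial time -/

lemma slab_bounds (hρ : IsRCFSolution T ρ) {t : ℝ} (ht : t ∈ Ico 0 T) :
    ∃ U ∈ 𝓝[Ico 0 T] t, ∃ M : ℝ, ∀ s ∈ U, s ∈ Ico 0 T ∧ ∀ θ ∈ Icc 0 (2 * π),
      |1 / ρ s θ| ≤ M ∧ |Real.log (ρ s θ)| ≤ M := by
  set t₁ := (t + T) / 2 with ht₁
  have h1 : t < t₁ := by linarith [ht.2]
  have h2 : t₁ < T := by linarith [ht.2]
  have hsub : Icc 0 t₁ ⊆ Ico 0 T := fun s hs => ⟨hs.1, hs.2.trans_lt h2⟩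
  have hρc : ContinuousOn (fun p : ℝ × ℝ => ρ p.1 p.2) (Icc 0 t₁ ×ˢ Icc 0 (2 * π)) :=
    hρ.1.continuousOn.mono (prod_mono hsub (subset_univ _))
  have hne : ∀ p ∈ Icc 0 t₁ ×ˢ Icc 0 (2 * π), ρ p.1 p.2 ≠ 0 := fun p hp =>
    ((hρ.curv (hsub hp.1)).pos p.2).ne'
  have hcomp : IsCompact (Icc 0 t₁ ×ˢ Icc 0 (2 * π)) := isCompact_Icc.prod isCompact_Icc
  obtain ⟨M1, hM1⟩ := hcomp.exists_bound_of_continuousOn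
    ((continuousOn_const (c := (1:ℝ))).div hρc hne)
  obtain ⟨M2, hM2⟩ := hcomp.exists_bound_of_continuousOn (hρc.log hne)
  refine ⟨Icc 0 t₁, ?_, max M1 M2, fun s hs => ⟨hsub hs, fun θ hθ => ?_⟩⟩
  · filter_upwards [self_mem_nhdsWithin, mem_nhdsWithin_of_mem_nhds (Iio_mem_nhds h1)] with s h3 h4
    exact ⟨h3.1, le_of_lt h4⟩
  · exact ⟨(hM1 (s, θ) ⟨hs, hθ⟩).trans (le_max_left _ _),
      (hM2 (s, θ) ⟨hs, hθ⟩).trans (le_max_right _ _)⟩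

lemma time_cont (hρ : IsRCFSolution T ρ) {t : ℝ} (ht : t ∈ Ico 0 T) (θ : ℝ) :
    ContinuousWithinAt (fun s => ρ s θ) (Ico 0 T) t :=
  (hρ.2.2.2.2.2 t ht θ).continuousWithinAt

lemma perim_continuousOn (hρ : IsRCFSolution T ρ) :
    ContinuousOn (fun s => perim (ρ s)) (Ico 0 T) := fun t ht => by
  obtain ⟨U, hU, M, hM⟩ := hρ.slab_bounds ht
  exact continuousWithinAt_integral_of_bound (by positivity) hU
    (fun s hs => (hρ.curv (hM s hs).1).div_cont continuous_const)
    (fun s hs θ hθ => ((hM s hs).2 θ hθ).1)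
    (fun θ _ => continuousWithinAt_const.div (hρ.time_cont ht θ) ((hρ.curv ht).pos θ).ne')

lemma ent_continuousOn (hρ : IsRCFSolution T ρ) :
    ContinuousOn (fun s => ∫ θ in (0:ℝ)..(2 * π), Real.log (ρ s θ)) (Ico 0 T) := fun t ht => by
  obtain ⟨U, hU, M, hM⟩ := hρ.slab_bounds ht
  exact continuousWithinAt_integral_of_bound (by positivity) hU
    (fun s hs => (hρ.curv (hM s hs).1).cont.log fun θ => ((hρ.curv (hM s hs).1).pos θ).ne')
    (fun s hs θ hθ => ((hM s hs).2 θ hθ).2)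
    (fun θ _ => (hρ.time_cont ht θ).log ((hρ.curv ht).pos θ).ne')

lemma encArea_continuousOn (hρ : IsRCFSolution T ρ) :
    ContinuousOn (fun s => encArea (ρ s)) (Ico 0 T) := fun t ht => by
  obtain ⟨U, hU, M, hM⟩ := hρ.slab_bounds ht
  have hw : ∀ (f : ℝ → ℝ), (∀ x, |f x| ≤ 1) → ∀ s ∈ U, ∀ β ∈ Icc 0 (2 * π), |f β / ρ s β| ≤ M :=
    fun f hf1 s hs β hβ => by
      rw [← mul_one_div, abs_mul]
      exact (mul_le_of_le_one_left (abs_nonneg _) (hf1 β)).trans ((hM s hs).2 β hβ).1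
  have hcw : ∀ (f : ℝ → ℝ), Continuous f → (∀ x, |f x| ≤ 1) → ∀ θ ∈ Icc 0 (2 * π),
      ContinuousWithinAt (fun s => ∫ β in (0:ℝ)..θ, f β / ρ s β) (Ico 0 T) t :=
    fun f hf hf1 θ hθ => continuousWithinAt_integral_of_bound hθ.1 hU
      (fun s hs => (hρ.curv (hM s hs).1).div_cont hf)
      (fun s hs β hβ => hw f hf1 s hs β ⟨hβ.1, hβ.2.trans hθ.2⟩)
      (fun β _ => continuousWithinAt_const.div (hρ.time_cont ht β) ((hρ.curv ht).pos β).ne')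
  refine continuousWithinAt_const.mul (continuousWithinAt_integral_of_bound
    (M := 2 * (M * (2 * π)) * M) (by positivity) hU
    (fun s hs => (hρ.curv (hM s hs).1).area_integrand_cont) (fun s hs θ hθ => ?_)
    (fun θ hθ => ?_))
  · have c1 : |(curveP (ρ s) θ).1| ≤ M * (2 * π) :=
      abs_integral_le_of_bound hθ (hw _ Real.abs_cos_le_one s hs)
    have c2 : |(curveP (ρ s) θ).2| ≤ M * (2 * π) :=
      abs_integral_le_of_bound hθ (hw _ Real.abs_sin_le_one s hs)
    have hB : 0 ≤ M * (2 * π) := (abs_nonneg _).trans c1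
    rw [← mul_one_div, abs_mul]
    refine mul_le_mul ?_ ((hM s hs).2 θ hθ).1 (abs_nonneg _) (by linarith)
    refine (abs_sub _ _).trans ?_
    rw [abs_mul, abs_mul]
    have := mul_le_mul c1 (Real.abs_sin_le_one θ) (abs_nonneg _) hB
    have := mul_le_mul c2 (Real.abs_cos_le_one θ) (abs_nonneg _) hB
    linarith
  · exact (((hcw _ Real.continuous_cos Real.abs_cos_le_one θ hθ).mul
      continuousWithinAt_const).sub ((hcw _ Real.continuous_sin Real.abs_sin_le_one θ hθ).mul
      continuousWithinAt_const)).div (hρ.time_cont ht θ) ((hρ.curv ht).pos θ).ne'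

/-- The ratio `h = σ/λ` is non-increasing. The evolution equations and the Cauchy–Schwarz bound
`∫ ρ ≥ 4π²/σ` reduce the sign of `h'` to `(σ² - πλ)(σ² - 2πλ) ≥ 0`, and `σ² ≥ 8λ`. -/
lemma hRatio_antitoneOn (hρ : IsRCFSolution T ρ) :
    AntitoneOn (fun s => hRatio (ρ s)) (Ico 0 T) := by
  have hd : ∀ t ∈ Ioo 0 T, HasDerivAt (fun s => hRatio (ρ s))
      (((-(∫ θ in (0:ℝ)..(2 * π), ρ t θ) + 4 * π * hRatio (ρ t)) * encArea (ρ t)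
        - perim (ρ t) * (-(2 * π) + 2 * hRatio (ρ t) * perim (ρ t))) / encArea (ρ t) ^ 2) t :=
    fun t ht => (hρ.perim_deriv ht).div (hρ.encArea_deriv ht)
      (hρ.curv (Ioo_subset_Ico_self ht)).encArea_pos.ne'
  apply antitoneOn_of_deriv_nonpos (convex_Ico _ _)
  · exact hρ.perim_continuousOn.div hρ.encArea_continuousOn fun t ht =>
      (hρ.curv ht).encArea_pos.ne'
  · rw [interior_Ico]
    exact fun t ht => (hd t ht).differentiableAt.differentiableWithinAt
  · rw [interior_Ico]
    intro t ht
    rw [(hd t ht).deriv]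
    have hr := hρ.curv (Ioo_subset_Ico_self ht)
    refine div_nonpos_of_nonpos_of_nonneg ?_ (sq_nonneg _)
    have h1 := hr.perim_pos
    have h2 := hr.encArea_pos
    have h3 := hr.isoperimetric
    have h4 := hr.integral_mul_perim
    have h5 : hRatio (ρ t) * encArea (ρ t) = perim (ρ t) := by
      unfold hRatio; field_simp
    set σ := perim (ρ t)
    set A := encArea (ρ t)
    set h := hRatio (ρ t)
    set I := ∫ θ in (0:ℝ)..(2 * π), ρ t θ
    have hπ := Real.pi_pos
    have hπ4 : π ≤ 4 := Real.pi_le_four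
    have q1 : 0 ≤ σ ^ 2 - π * A := by nlinarith
    have q2 : 0 ≤ σ ^ 2 - 2 * π * A := by nlinarith
    have q3 := mul_nonneg q1 q2
    have q4 : 4 * π ^ 2 * A ^ 2 ≤ I * σ * A ^ 2 := mul_le_mul_of_nonneg_right h4 (sq_nonneg _)
    by_contra! hcon
    have q5 := mul_pos hcon (mul_pos h1 h2)
    have q6 : ((-I + 4 * π * h) * A - σ * (-(2 * π) + 2 * h * σ)) * (σ * A)
        = -(I * σ * A ^ 2) + 6 * π * σ ^ 2 * A - 2 * σ ^ 4 := by
      rw [← h5]; ring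
    rw [q6] at q5
    nlinarith

end IsRCFSolution

/-! ### The minimum principle -/

lemma IsCurvature.second_nonneg {r : ℝ → ℝ} (hr : IsCurvature r) {θ : ℝ}
    (hmin : ∀ x, r θ ≤ r x) : 0 ≤ iteratedDeriv 2 r θ := by
  by_contra! hneg
  have hlm : IsLocalMin r θ := Eventually.of_forall hmin
  have hd2 : iteratedDeriv 2 r θ = deriv (deriv r) θ := by
    rw [iteratedDeriv_succ, iteratedDeriv_one]
  -- A negative second derivative makes `θ` a local maximum too, so `r` is locally constant.
  have hmax : IsLocalMax r θ :=
    isLocalMax_of_deriv_deriv_neg (hd2 ▸ hneg) hlm.deriv_eq_zero hr.cont.continuousAt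
  have hconst : r =ᶠ[𝓝 θ] fun _ => r θ := by
    filter_upwards [hmax] with x hx
    exact le_antisymm hx (hmin x)
  have : deriv (deriv r) θ = 0 := by
    rw [hconst.deriv.deriv_eq]
    simp
  linarith

namespace IsRCFSolution

variable {T : ℝ} {ρ : ℝ → ℝ → ℝ}

/-- For `K > h₀²`, the function `ρ e^{Ks}` cannot attain its minimum over a time slab at a positive
time, since there its time derivative is at least `((ρ - h)² - h² + K) ρ e^{Ks} > 0`. -/
lemma lower_bound_aux (hρ : IsRCFSolution T ρ) {m K t : ℝ} (hm : ∀ θ, m ≤ ρ 0 θ)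
    (hK : hRatio (ρ 0) ^ 2 < K) (ht : t ∈ Ico 0 T) (θ : ℝ) : m ≤ ρ t θ * Real.exp (K * t) := by
  have hπ := Real.pi_pos
  have hsub : Icc 0 t ⊆ Ico 0 T := fun s hs => ⟨hs.1, hs.2.trans_lt ht.2⟩
  have hfc : ContinuousOn (fun p : ℝ × ℝ => ρ p.1 p.2 * Real.exp (K * p.1))
      (Icc 0 t ×ˢ Icc 0 (2 * π)) :=
    (hρ.1.continuousOn.mono (prod_mono hsub (subset_univ _))).mul (by fun_prop)
  obtain ⟨⟨s, α⟩, ⟨hs, hα⟩, hmin⟩ := (isCompact_Icc.prod isCompact_Icc).exists_isMinOn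
    ⟨((0:ℝ), (0:ℝ)), ⟨le_rfl, ht.1⟩, ⟨le_rfl, by positivity⟩⟩ hfc
  have hmin' : ∀ u ∈ Icc 0 t, ∀ x, ρ s α * Real.exp (K * s) ≤ ρ u x * Real.exp (K * u) := by
    intro u hu x
    have hp : Function.Periodic (ρ u) (2 * π) := (hρ.curv (hsub hu)).per
    obtain ⟨y, hy, hxy⟩ := hp.exists_mem_Ico₀ (by positivity) x
    rw [hxy]
    exact hmin (a := (u, y)) ⟨hu, Ico_subset_Icc_self hy⟩
  refine le_trans ?_ (hmin' t ⟨ht.1, le_rfl⟩ θ)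
  rcases hs.1.eq_or_lt with h0 | h0
  · subst h0
    simpa using hm α
  exfalso
  have hsT : s ∈ Ioo 0 T := ⟨h0, (hsub hs).2⟩
  have hr := hρ.curv (hsub hs)
  have h2 : 0 ≤ iteratedDeriv 2 (ρ s) α := hr.second_nonneg fun x =>
    le_of_mul_le_mul_right (hmin' s hs x) (Real.exp_pos _)
  have hφ : HasDerivAt (fun u => ρ u α * Real.exp (K * u))
      (ρ s α ^ 2 * speedK (ρ s) α * Real.exp (K * s)
        + ρ s α * (Real.exp (K * s) * K)) s := by
    have he : HasDerivAt (fun u => Real.exp (K * u)) (Real.exp (K * s) * K) s := by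
      simpa using ((hasDerivAt_id s).const_mul K).exp
    exact (hρ.time_deriv hsT α).mul he
  have hh : hRatio (ρ s) ≤ hRatio (ρ 0) :=
    hρ.hRatio_antitoneOn ⟨le_rfl, ht.1.trans_lt ht.2⟩ (hsub hs) hs.1
  have hpos : 0 < ρ s α ^ 2 * speedK (ρ s) α * Real.exp (K * s)
      + ρ s α * (Real.exp (K * s) * K) := by
    have hρp := hr.pos α
    have hhp := hr.hRatio_pos
    have hh2 : hRatio (ρ s) ^ 2 ≤ hRatio (ρ 0) ^ 2 := pow_le_pow_left₀ hhp.le hh 2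
    have e : ρ s α ^ 2 * speedK (ρ s) α * Real.exp (K * s) + ρ s α * (Real.exp (K * s) * K)
        = ρ s α * Real.exp (K * s) * (ρ s α * iteratedDeriv 2 (ρ s) α
          + (ρ s α - hRatio (ρ s)) ^ 2 + (K - hRatio (ρ s) ^ 2)) := by
      unfold speedK; ring
    rw [e]
    have : 0 < K - hRatio (ρ s) ^ 2 := by linarith
    positivity
  have hev := (hasDerivAt_iff_tendsto_slope.1 hφ).eventually (lt_mem_nhds hpos)
  have hev' : ∀ᶠ u in 𝓝[<] s, 0 < slope (fun u => ρ u α * Real.exp (K * u)) s u :=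
    hev.filter_mono (nhdsWithin_mono s fun u hu => ne_of_lt hu)
  obtain ⟨u, hu1, hu2⟩ := (hev'.and (Ioo_mem_nhdsLT h0)).exists
  have hge := hmin' u ⟨hu2.1.le, hu2.2.le.trans hs.2⟩ α
  rw [slope_def_field] at hu1
  have := div_nonpos_of_nonneg_of_nonpos (sub_nonneg.2 hge) (sub_nonpos.2 hu2.2.le)
  linarith

lemma lower_bound (hρ : IsRCFSolution T ρ) {m t : ℝ} (hm : ∀ θ, m ≤ ρ 0 θ)
    (ht : t ∈ Ico 0 T) (θ : ℝ) : m * Real.exp (-(hRatio (ρ 0) ^ 2 * t)) ≤ ρ t θ := by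
  have hlim : Tendsto (fun K => ρ t θ * Real.exp (K * t)) (𝓝[>] (hRatio (ρ 0) ^ 2))
      (𝓝 (ρ t θ * Real.exp (hRatio (ρ 0) ^ 2 * t))) := by
    have : Continuous fun K => ρ t θ * Real.exp (K * t) := by fun_prop
    exact this.continuousAt.tendsto.mono_left nhdsWithin_le_nhds
  have h1 := ge_of_tendsto hlim (b := m) (by
    filter_upwards [self_mem_nhdsWithin] with K hK
    exact hρ.lower_bound_aux hm hK ht θ)
  rw [Real.exp_neg, ← div_eq_mul_inv]
  exact (div_le_iff₀ (Real.exp_pos _)).2 h1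

/-- The entropy dissipation estimate along the flow, with the lower bound of `lower_bound`. -/
lemma ent_rate (hρ : IsRCFSolution T ρ) {m t : ℝ} (hm0 : 0 < m) (hm : ∀ θ, m ≤ ρ 0 θ)
    (ht : t ∈ Ico 0 T) :
    ∫ θ in (0:ℝ)..(2 * π), ρ t θ * speedK (ρ t) θ
      ≤ -(2 * π * m ^ 2 * Real.exp (-2 * hRatio (ρ 0) ^ 2 * t)) := by
  have h1 := (hρ.curv ht).dissipation (m := m * Real.exp (-(hRatio (ρ 0) ^ 2 * t)))
    (by positivity) (hρ.lower_bound hm ht)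
  have e : (m * Real.exp (-(hRatio (ρ 0) ^ 2 * t))) ^ 2
      = m ^ 2 * Real.exp (-2 * hRatio (ρ 0) ^ 2 * t) := by
    rw [mul_pow, ← Real.exp_nat_mul]; congr 2; push_cast; ring
  rw [e] at h1
  simp only [speedK, mul_add]
  linarith

end IsRCFSolution

/-- Along the renormalized curvature flow, the entropy
`Ent(t) = ∫₀^{2π} log ρ(t,θ) dθ` is non-increasing, and for all `t ∈ [0,T)`:
`2π(log ρ_inf(0) − h₀² t) ≤ Ent(t) ≤ Ent(0) + (π ρ_inf(0)²/(2h₀²))(e^{−2h₀² t} − 1)`. -/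
theorem stmt10 (T : ℝ) (hT : 0 < T) (ρ : ℝ → ℝ → ℝ) (hρ : IsRCFSolution T ρ) :
    AntitoneOn (fun t => ∫ θ in (0:ℝ)..(2 * π), Real.log (ρ t θ)) (Ico 0 T) ∧
    ∀ t ∈ Ico (0:ℝ) T,
      2 * π * (Real.log (sInf (Set.range (ρ 0))) - (hRatio (ρ 0)) ^ 2 * t)
        ≤ ∫ θ in (0:ℝ)..(2 * π), Real.log (ρ t θ) ∧
      (∫ θ in (0:ℝ)..(2 * π), Real.log (ρ t θ))
        ≤ (∫ θ in (0:ℝ)..(2 * π), Real.log (ρ 0 θ)) +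
            π * (sInf (Set.range (ρ 0))) ^ 2 / (2 * (hRatio (ρ 0)) ^ 2) *
              (Real.exp (-2 * (hRatio (ρ 0)) ^ 2 * t) - 1) := by
  have hπ := Real.pi_pos
  have h0T : (0:ℝ) ∈ Ico 0 T := ⟨le_rfl, hT⟩
  have hr0 := hρ.curv h0T
  have hh0 := hr0.hRatio_pos
  -- By periodicity and compactness the initial infimum is attained, hence positive.
  obtain ⟨α, -, hα⟩ := isCompact_Icc.exists_isMinOn
    (⟨0, le_rfl, by positivity⟩ : (Icc 0 (2 * π)).Nonempty) hr0.cont.continuousOn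
  have hα' : ∀ x, ρ 0 α ≤ ρ 0 x := fun x => by
    have hp : Function.Periodic (ρ 0) (2 * π) := hr0.per
    obtain ⟨y, hy, hxy⟩ := hp.exists_mem_Ico₀ (by positivity) x
    rw [hxy]
    exact hα (Ico_subset_Icc_self hy)
  have hinf : sInf (Set.range (ρ 0)) = ρ 0 α :=
    IsLeast.csInf_eq ⟨⟨α, rfl⟩, by rintro _ ⟨x, rfl⟩; exact hα' x⟩
  rw [hinf]
  set m := ρ 0 α with hm
  have hm0 : 0 < m := hr0.pos α
  set h := hRatio (ρ 0) with hh
  refine ⟨?_, fun t ht => ⟨?_, ?_⟩⟩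
  · apply antitoneOn_of_deriv_nonpos (convex_Ico _ _) hρ.ent_continuousOn
    · rw [interior_Ico]
      exact fun t ht => (hρ.ent_deriv ht).differentiableAt.differentiableWithinAt
    · rw [interior_Ico]
      intro t ht
      rw [(hρ.ent_deriv ht).deriv]
      refine (hρ.ent_rate hm0 hα' (Ioo_subset_Ico_self ht)).trans (neg_nonpos.2 ?_)
      positivity
  · have hr := hρ.curv ht
    have hle : ∀ θ, Real.log m - h ^ 2 * t ≤ Real.log (ρ t θ) := fun θ => by
      have := Real.log_le_log (by positivity) (hρ.lower_bound hα' ht θ)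
      rw [Real.log_mul hm0.ne' (Real.exp_pos _).ne', Real.log_exp] at this
      linarith
    have := intervalIntegral.integral_mono_on (a := 0) (b := 2 * π) (μ := volume) (by positivity)
      (f := fun _ => Real.log m - h ^ 2 * t) (by simp)
      ((hr.cont.log fun θ => (hr.pos θ).ne').intervalIntegrable _ _) (fun θ _ => hle θ)
    rw [intervalIntegral.integral_const, smul_eq_mul, sub_zero] at this
    exact this
  -- The entropy minus the explicit term of the upper bound is non-increasing.
  · have hd : ∀ s ∈ Ioo 0 T, HasDerivAt (fun s => (∫ θ in (0:ℝ)..(2 * π), Real.log (ρ s θ))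
        - π * m ^ 2 / (2 * h ^ 2) * (Real.exp (-2 * h ^ 2 * s) - 1))
        ((∫ θ in (0:ℝ)..(2 * π), ρ s θ * speedK (ρ s) θ)
          - π * m ^ 2 / (2 * h ^ 2) * (Real.exp (-2 * h ^ 2 * s) * (-2 * h ^ 2))) s := by
      intro s hs
      have he : HasDerivAt (fun u => Real.exp (-2 * h ^ 2 * u))
          (Real.exp (-2 * h ^ 2 * s) * (-2 * h ^ 2)) s := by
        exact ((hasDerivAt_id s).const_mul (-2 * h ^ 2)).exp.congr_deriv (by simp)
      exact (hρ.ent_deriv hs).sub ((he.sub_const 1).const_mul _)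
    have hanti : AntitoneOn (fun s => (∫ θ in (0:ℝ)..(2 * π), Real.log (ρ s θ))
        - π * m ^ 2 / (2 * h ^ 2) * (Real.exp (-2 * h ^ 2 * s) - 1)) (Ico 0 T) := by
      apply antitoneOn_of_deriv_nonpos (convex_Ico _ _)
      · exact hρ.ent_continuousOn.sub (by fun_prop)
      · rw [interior_Ico]
        exact fun s hs => (hd s hs).differentiableAt.differentiableWithinAt
      · rw [interior_Ico]
        intro s hs
        rw [(hd s hs).deriv]
        have h1 := hρ.ent_rate hm0 hα' (Ioo_subset_Ico_self hs)
        have e : π * m ^ 2 / (2 * h ^ 2) * (Real.exp (-2 * h ^ 2 * s) * (-2 * h ^ 2))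
            = -(π * m ^ 2 * Real.exp (-2 * h ^ 2 * s)) := by
          field_simp
        rw [e]
        have : 0 < π * m ^ 2 * Real.exp (-2 * h ^ 2 * s) := by positivity
        linarith
    have := hanti h0T ht ht.1
    simp only [mul_zero, Real.exp_zero, sub_self, sub_zero] at this
    linarith
end
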